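/- arXiv:1708.07395 — 15 statements merged into one kernel-verified Lean document; each statement's English description precedes it below -/
import Mathlib

section
/- Identify ℝ^{2n} with ℂⁿ (n ≥ 1), with real inner product ⟨u,v⟩ = Re(∑ⱼ uⱼ·conj(vⱼ)) and standard symplectic form ω(u,v) = ⟨i·u, v⟩. Then the set {(a,b) ∈ ℂⁿ × ℂⁿ : ‖a‖ = ‖b‖ = 1 and ω(a,b) > 0} is path-connected, and likewise the set {(a,b) ∈ ℂⁿ × ℂⁿ : ‖a‖ = ‖b‖ = 1 and ω(a,b) < 0} is path-connected. -/
/-- The real inner product `⟨u,v⟩ = Re (∑ⱼ uⱼ conj vⱼ)` on `ℂⁿ ≅ ℝ^{2n}`. -/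
noncomputable def rinner {n : ℕ} (u v : EuclideanSpace ℂ (Fin n)) : ℝ :=
  (inner ℂ u v : ℂ).re

/-- The standard linear symplectic form `ω(u,v) = ⟨i·u, v⟩` on `ℂⁿ ≅ ℝ^{2n}`. -/
noncomputable def symp {n : ℕ} (u v : EuclideanSpace ℂ (Fin n)) : ℝ :=
  rinner (Complex.I • u) v

lemma aux_pathConn_gen (V : Type) [NormedAddCommGroup V] [InnerProductSpace ℂ V]
    (hrank : 1 < Module.rank ℝ V) (c : ℂ) (hc : ‖c‖ = 1) :
    IsPathConnected {p : V × V |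
        ‖p.1‖ = 1 ∧ ‖p.2‖ = 1 ∧ 0 < (inner ℂ (c • p.1) p.2 : ℂ).re} := by
  have hself : ∀ a : V, ‖a‖ = 1 → (inner ℂ (c • a) (c • a) : ℂ).re = 1 := by
    intro a ha
    have h := inner_self_eq_norm_sq (𝕜 := ℂ) (c • a)
    rw [norm_smul, ha, hc] at h
    exact h.trans (by norm_num)
  have hsph := isPathConnected_sphere hrank (0 : V) zero_le_one
  have hcore : IsPathConnected ((fun a : V => (a, c • a)) '' Metric.sphere (0 : V) 1) :=
    hsph.image (by fun_prop)
  let T : Set (V × V) := {p | ‖p.1‖ = 1 ∧ 0 < (inner ℂ (c • p.1) p.2 : ℂ).re}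
  have hsub : ((fun a : V => (a, c • a)) '' Metric.sphere (0 : V) 1) ⊆ T := by
    rintro _ ⟨a, ha, rfl⟩
    have ha' : ‖a‖ = 1 := by simpa using ha
    exact ⟨ha', by simp only [hself a ha']; norm_num⟩
  have hT : IsPathConnected T := by
    obtain ⟨x, hx, hxj⟩ := hcore
    refine ⟨x, hsub hx, ?_⟩
    rintro ⟨a, v⟩ ⟨ha, hv⟩
    simp only at ha hv
    refine ((hxj (y := (a, c • a)) ⟨a, by simpa using ha, rfl⟩).mono hsub).trans ?_
    refine JoinedIn.ofLine (f := fun t : ℝ => (a, (1 - t) • (c • a) + t • v)) ?_ ?_ ?_ ?_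
    · fun_prop
    · simp
    · simp
    · rintro _ ⟨t, ⟨ht0, ht1⟩, rfl⟩
      refine ⟨ha, ?_⟩
      have e : (inner ℂ (c • a) ((1 - t) • (c • a) + t • v) : ℂ).re
          = (1 - t) + t * (inner ℂ (c • a) v : ℂ).re := by
        rw [inner_add_right, inner_smul_right_eq_smul (c • a) (c • a),
          inner_smul_right_eq_smul (c • a) v, Complex.add_re,
          Complex.smul_re, Complex.smul_re, hself a ha, smul_eq_mul, smul_eq_mul, mul_one]
      simp only [e]
      rcases eq_or_lt_of_le ht0 with h | h
      · subst h; simp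
      · have := mul_pos h hv
        linarith
  have hne : ∀ p ∈ T, ‖p.2‖ ≠ 0 := by
    rintro ⟨a, v⟩ ⟨_, hv⟩ h0
    have : v = 0 := by simpa using h0
    simp [this] at hv
  have himg : IsPathConnected ((fun p : V × V => (p.1, ‖p.2‖⁻¹ • p.2)) '' T) := by
    refine hT.image' ?_
    refine continuousOn_fst.prodMk (ContinuousOn.fun_smul ?_ continuousOn_snd)
    exact continuousOn_snd.norm.inv₀ hne
  convert himg using 1
  ext ⟨a, b⟩
  constructor
  · rintro ⟨ha, hb, hab⟩
    refine ⟨(a, b), ⟨ha, hab⟩, ?_⟩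
    simp only at hb
    simp [hb]
  · rintro ⟨⟨a', v⟩, hp, heq⟩
    have h0 := hne _ hp
    obtain ⟨ha, hv⟩ := hp
    simp only [Prod.mk.injEq] at heq ha hv h0
    obtain ⟨rfl, rfl⟩ := heq
    refine ⟨ha, ?_, ?_⟩
    · simp only [norm_smul, norm_inv, norm_norm]
      exact inv_mul_cancel₀ h0
    · simp only
      rw [inner_smul_right_eq_smul, Complex.smul_re]
      have : 0 < ‖v‖ := lt_of_le_of_ne (norm_nonneg _) (Ne.symm h0)
      exact mul_pos (inv_pos.mpr this) hv

lemma aux_pathConn (n : ℕ) (hn : 1 ≤ n) (c : ℂ) (hc : ‖c‖ = 1) :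
    IsPathConnected {p : EuclideanSpace ℂ (Fin n) × EuclideanSpace ℂ (Fin n) |
        ‖p.1‖ = 1 ∧ ‖p.2‖ = 1 ∧ 0 < (inner ℂ (c • p.1) p.2 : ℂ).re} := by
  refine aux_pathConn_gen _ ?_ c hc
  have h2 : Module.finrank ℝ (EuclideanSpace ℂ (Fin n)) = 2 * n := by
    rw [← Module.finrank_mul_finrank ℝ ℂ, Complex.finrank_real_complex]
    simp
  have : FiniteDimensional ℝ (EuclideanSpace ℂ (Fin n)) := FiniteDimensional.complexToReal _
  rw [← Module.finrank_eq_rank ℝ, h2]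
  exact_mod_cast (by omega : 1 < 2 * n)

/-- The set of pairs of unit vectors `(a,b)` in `ℂⁿ ≅ ℝ^{2n}` with
`ω(a,b) > 0` is path-connected, and likewise for `ω(a,b) < 0`. -/
theorem stmt_2 (n : ℕ) (hn : 1 ≤ n) :
    IsPathConnected {p : EuclideanSpace ℂ (Fin n) × EuclideanSpace ℂ (Fin n) |
        ‖p.1‖ = 1 ∧ ‖p.2‖ = 1 ∧ 0 < symp p.1 p.2} ∧
    IsPathConnected {p : EuclideanSpace ℂ (Fin n) × EuclideanSpace ℂ (Fin n) |
        ‖p.1‖ = 1 ∧ ‖p.2‖ = 1 ∧ symp p.1 p.2 < 0} := by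
  refine ⟨aux_pathConn n hn Complex.I (by simp), ?_⟩
  have h := aux_pathConn n hn (-Complex.I) (by simp)
  convert h using 5
  rw [neg_smul, inner_neg_left, Complex.neg_re, symp, rinner, neg_pos]
end

section
/- Let p : ℝ → ℝ be twice continuously differentiable and 2π-periodic, and set p̄(α) = (p(α) + p(α + π))/2. Then ∫₀^{2π} ∫_{α₁}^{α₁+π} (p(α₁) + p''(α₁))·(p(α₂) + p''(α₂))·sin(α₂ − α₁) dα₂ dα₁ = 2·∫₀^{2π} (p̄(α) + p̄''(α))·p̄(α) dα. -/
open Real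

/-- For a `C²`, `2π`-periodic `p : ℝ → ℝ` and
`p̄(α) = (p(α) + p(α+π))/2`,
`∫₀^{2π} ∫_{α₁}^{α₁+π} (p(α₁)+p''(α₁))(p(α₂)+p''(α₂)) sin(α₂−α₁) dα₂ dα₁
  = 2 ∫₀^{2π} (p̄(α)+p̄''(α)) p̄(α) dα`. -/
theorem stmt_4 (p : ℝ → ℝ) (hp : ContDiff ℝ 2 p)
    (hper : ∀ α, p (α + 2 * π) = p α)
    (pbar : ℝ → ℝ) (hpbar : ∀ α, pbar α = (p α + p (α + π)) / 2) :
    (∫ α₁ in (0:ℝ)..(2 * π), ∫ α₂ in α₁..(α₁ + π),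
        (p α₁ + deriv (deriv p) α₁) * (p α₂ + deriv (deriv p) α₂) * Real.sin (α₂ - α₁))
      = 2 * ∫ α in (0:ℝ)..(2 * π), (pbar α + deriv (deriv pbar) α) * pbar α := by
  have hd1 : ContDiff ℝ 1 (deriv p) := by
    have h : ContDiff ℝ (1 + 1) p := by
      have e : (1 + 1 : WithTop ℕ∞) = 2 := by norm_num
      rw [e]; exact hp
    exact (contDiff_succ_iff_deriv.1 h).2.2
  have hD0 : Differentiable ℝ p := hp.differentiable (by norm_num)
  have hD1 : Differentiable ℝ (deriv p) := hd1.differentiable (by norm_num)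
  have hc2 : Continuous (deriv (deriv p)) := hd1.continuous_deriv (le_refl _)
  have hc0 : Continuous p := hp.continuous
  have hpb : pbar = fun α => (p α + p (α + π)) / 2 := funext hpbar
  have hcb : Continuous pbar := by rw [hpb]; fun_prop
  have hbper : ∀ α, pbar (α + π) = pbar α := by
    intro α
    rw [hpbar, hpbar, show α + π + π = α + 2 * π by ring, hper]; ring
  have hdper : ∀ α, deriv p (α + 2 * π) = deriv p α := by
    intro α
    rw [← deriv_comp_add_const p (2 * π) α]
    congr 1
    exact funext hper
  have hddper : ∀ α, deriv (deriv p) (α + 2 * π) = deriv (deriv p) α := by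
    intro α
    rw [← deriv_comp_add_const (deriv p) (2 * π) α]
    congr 1
    exact funext hdper
  have key : ∀ f : ℝ → ℝ, Differentiable ℝ f →
      deriv (fun α => (f α + f (α + π)) / 2) = fun α => (deriv f α + deriv f (α + π)) / 2 := by
    intro f hf
    funext α
    exact (((hf α).hasDerivAt.add ((hf (α + π)).hasDerivAt.comp_add_const α π)).div_const 2).deriv
  have hb2 : ∀ α, deriv (deriv pbar) α
      = (deriv (deriv p) α + deriv (deriv p) (α + π)) / 2 := by
    intro α
    rw [hpb, key p hD0, key (deriv p) hD1]
  have inner : ∀ a : ℝ, (∫ x in a..(a + π),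
      (p a + deriv (deriv p) a) * (p x + deriv (deriv p) x) * Real.sin (x - a))
      = 2 * ((p a + deriv (deriv p) a) * pbar a) := by
    intro a
    have hF : ∀ x ∈ Set.uIcc a (a + π), HasDerivAt
        (fun x => (p a + deriv (deriv p) a) *
          (deriv p x * Real.sin (x - a) - p x * Real.cos (x - a)))
        ((p a + deriv (deriv p) a) * (p x + deriv (deriv p) x) * Real.sin (x - a)) x := by
      intro x _
      have h1 := (Real.hasDerivAt_sin (x - a)).comp_sub_const x a
      have h2 := (Real.hasDerivAt_cos (x - a)).comp_sub_const x a
      have h3 := (((hD1 x).hasDerivAt.mul h1).sub ((hD0 x).hasDerivAt.mul h2)).const_mul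
        (p a + deriv (deriv p) a)
      refine h3.congr_deriv ?_
      ring
    rw [intervalIntegral.integral_eq_sub_of_hasDerivAt hF
      (Continuous.intervalIntegrable (by fun_prop) _ _), hpbar]
    simp
    ring
  simp_rw [inner]
  rw [intervalIntegral.integral_const_mul]
  congr 1
  have hG : Function.Periodic (fun α => (p α + deriv (deriv p) α) * pbar α) (2 * π) := by
    intro α
    have : pbar (α + 2 * π) = pbar α := by
      rw [show α + 2 * π = α + π + π by ring, hbper, hbper]
    simp only [hper, hddper, this]
  have hshift : (∫ α in (0:ℝ)..(2 * π), (p (α + π) + deriv (deriv p) (α + π)) * pbar α)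
      = ∫ α in (0:ℝ)..(2 * π), (p α + deriv (deriv p) α) * pbar α := by
    have h1 := intervalIntegral.integral_comp_add_right (a := 0) (b := 2 * π)
      (fun α => (p α + deriv (deriv p) α) * pbar α) π
    simp only [hbper] at h1
    rw [h1]
    have h2 := hG.intervalIntegral_add_eq π 0
    rw [zero_add] at h2
    rw [zero_add, add_comm (2 * π) π, h2]
  have hsplit : ∀ α, (pbar α + deriv (deriv pbar) α) * pbar α
      = (1 / 2) * ((p α + deriv (deriv p) α) * pbar α
        + (p (α + π) + deriv (deriv p) (α + π)) * pbar α) := by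
    intro α
    rw [hb2, hpbar]; ring
  simp_rw [hsplit]
  rw [intervalIntegral.integral_const_mul, intervalIntegral.integral_add
    (Continuous.intervalIntegrable (by fun_prop) _ _)
    (Continuous.intervalIntegrable (by fun_prop) _ _), hshift]
  ring
end

section
/- Let γ : ℝ → ℝ² be a C² curve parameterized by arc length, i.e. ‖γ'(t)‖ = 1 for all t, let J : ℝ² → ℝ² be the rotation by π/2 (J(a,b) = (−b,a)), and define the curvature k(t) ∈ ℝ by γ''(t) = k(t)·Jγ'(t). Let S(t₁,t₂) = ω(γ(t₁), γ(t₂)), where ω(u,v) = u₁v₂ − u₂v₁. Then for all t₁, t₂, the second derivative of the map s ↦ S(t₁, s) at s = t₂ equals k(t₂)·ω(γ(t₁), Jγ'(t₂)); consequently, if k(t₂) = 0, then for all t₁, t₃ the quantity S₂₂(t₁,t₂) + S₁₁(t₂,t₃) vanishes, where S₂₂(t₁,t₂) is the second derivative of s ↦ S(t₁,s) at t₂ and S₁₁(t₂,t₃) is the second derivative of s ↦ S(s,t₃) at t₂. -/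
/-- The standard symplectic (area) form `ω(u,v) = u₁v₂ − u₂v₁` on `ℝ²`. -/
def symp2 (u v : ℝ × ℝ) : ℝ := u.1 * v.2 - u.2 * v.1

/-- Rotation by `π/2`: `J(a,b) = (−b,a)`. -/
def Jrot (u : ℝ × ℝ) : ℝ × ℝ := (-u.2, u.1)

/-- For a `C²` arc-length parameterized plane curve `γ` with curvature `k`
(defined by `γ'' = k · Jγ'`) and generating function `S(t₁,t₂) = ω(γ(t₁),γ(t₂))`:
`S₂₂(t₁,t₂) = k(t₂)·ω(γ(t₁), Jγ'(t₂))`; consequently if `k(t₂) = 0` then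
`S₂₂(t₁,t₂) + S₁₁(t₂,t₃) = 0` for all `t₁, t₃`. -/
theorem stmt_5 (γ : ℝ → ℝ × ℝ) (hγ : ContDiff ℝ 2 γ)
    (harc : ∀ t, (deriv γ t).1 ^ 2 + (deriv γ t).2 ^ 2 = 1)
    (k : ℝ → ℝ) (hk : ∀ t, deriv (deriv γ) t = k t • Jrot (deriv γ t)) :
    (∀ t₁ t₂, deriv (deriv fun s => symp2 (γ t₁) (γ s)) t₂
        = k t₂ * symp2 (γ t₁) (Jrot (deriv γ t₂))) ∧
    (∀ t₂, k t₂ = 0 → ∀ t₁ t₃,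
        deriv (deriv fun s => symp2 (γ t₁) (γ s)) t₂
          + deriv (deriv fun s => symp2 (γ s) (γ t₃)) t₂ = 0) := by
  have lin : ∀ (f : ℝ → ℝ × ℝ), Differentiable ℝ f → ∀ u : ℝ × ℝ,
      (deriv fun s => symp2 u (f s)) = fun s => symp2 u (deriv f s) := by
    intro f hf u
    funext s
    have h := (hf s).hasDerivAt
    have h1 : HasDerivAt (fun s => (f s).1) (deriv f s).1 s :=
      (ContinuousLinearMap.fst ℝ ℝ ℝ).hasFDerivAt.comp_hasDerivAt s h
    have h2 : HasDerivAt (fun s => (f s).2) (deriv f s).2 s :=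
      (ContinuousLinearMap.snd ℝ ℝ ℝ).hasFDerivAt.comp_hasDerivAt s h
    exact ((h2.const_mul u.1).sub (h1.const_mul u.2)).deriv
  have d1 : Differentiable ℝ γ := hγ.differentiable (by norm_num)
  have d2 : Differentiable ℝ (deriv γ) := by
    have h : ContDiff ℝ (1 + 1) γ := by
      rw [one_add_one_eq_two]
      exact hγ
    exact (contDiff_succ_iff_deriv.1 h).2.2.differentiable (by norm_num)
  have key : ∀ u t, deriv (deriv fun s => symp2 u (γ s)) t
      = k t * symp2 u (Jrot (deriv γ t)) := by
    intro u t
    rw [lin γ d1, lin _ d2]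
    simp only [hk, symp2, Prod.smul_fst, Prod.smul_snd, smul_eq_mul]
    ring
  refine ⟨fun t₁ t₂ => key _ _, fun t₂ h0 t₁ t₃ => ?_⟩
  have e : (fun s => symp2 (γ s) (γ t₃)) = fun s => symp2 (-γ t₃) (γ s) := by
    funext s
    simp only [symp2, Prod.fst_neg, Prod.snd_neg]
    ring
  rw [e, key, key, h0]
  ring
end

section
/- Let γ : ℝ → ℝ² be a smooth (C^∞) curve in affine parameterization, i.e. det(γ'(t), γ''(t)) = 1 for all t, where det(u,v) = u₁v₂ − u₂v₁. Fix t₀ ∈ ℝ and let δ : (−r, r) → ℝ (r > 0) be a C³ function with δ(0) = 0 such that det(γ(t₀ + δ(ε)) − γ(t₀ − ε), γ'(t₀)) = 0 for all ε ∈ (−r, r). Then δ'(0)² = 1 and δ''(0) = 0. In particular, if δ'(0) ≥ 0 then δ(ε) = ε + O(ε³) as ε → 0. -/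
open Asymptotics

/-- The standard area form `det(u,v) = u₁v₂ − u₂v₁` on `ℝ²`. -/
def det2 (u v : ℝ × ℝ) : ℝ := u.1 * v.2 - u.2 * v.1

theorem bigO_step (f f' : ℝ → ℝ) (n : ℕ) (s : ℝ) (hs : 0 < s)
    (hf : ∀ x ∈ Set.Ioo (-s) s, HasDerivAt f (f' x) x) (h0 : f 0 = 0)
    (hO : f' =O[nhds 0] fun x => x ^ n) : f =O[nhds 0] fun x => x ^ (n+1) := by
  obtain ⟨C, hcp, hC⟩ := hO.exists_pos
  replace hC := hC.bound
  obtain ⟨ρ, hρ, hb⟩ := Metric.eventually_nhds_iff.1 hC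
  refine IsBigO.of_bound C ?_
  refine Metric.eventually_nhds_iff.2 ⟨min ρ s, lt_min hρ hs, fun x hx => ?_⟩
  simp only [Real.dist_eq, sub_zero] at hx hb
  have hx1 := lt_of_lt_of_le hx (min_le_left _ _)
  have hx2 := lt_of_lt_of_le hx (min_le_right _ _)
  have hmem : ∀ y ∈ Set.Icc (-|x|) |x|, |y| ≤ |x| := fun y hy => abs_le.2 hy
  have key := Convex.norm_image_sub_le_of_norm_hasDerivWithin_le (f := f) (f' := f')
    (s := Set.Icc (-|x|) |x|) (C := C * |x| ^ n) (x := 0) (y := x)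
    (fun y hy => (hf y (abs_lt.1 ((hmem y hy).trans_lt hx2))).hasDerivWithinAt)
    (fun y hy => by
      have h1 := hb ((hmem y hy).trans_lt hx1)
      rw [norm_pow, Real.norm_eq_abs y] at h1
      refine h1.trans ?_
      have := hmem y hy
      gcongr)
    (convex_Icc _ _) (by simp) ⟨neg_abs_le x, le_abs_self x⟩
  rw [h0, sub_zero, sub_zero] at key
  rw [norm_pow, pow_succ, ← mul_assoc]
  exact key

theorem hasDeriv_fst {c : ℝ → ℝ × ℝ} {c' : ℝ × ℝ} {t : ℝ} (h : HasDerivAt c c' t) :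
    HasDerivAt (fun s => (c s).1) c'.1 t := by
  have := (ContinuousLinearMap.fst ℝ ℝ ℝ).hasFDerivAt.comp_hasDerivAt t h
  exact this

theorem hasDeriv_snd {c : ℝ → ℝ × ℝ} {c' : ℝ × ℝ} {t : ℝ} (h : HasDerivAt c c' t) :
    HasDerivAt (fun s => (c s).2) c'.2 t := by
  have := (ContinuousLinearMap.snd ℝ ℝ ℝ).hasFDerivAt.comp_hasDerivAt t h
  exact this

theorem deriv_zero_of_zero {F : ℝ → ℝ} {F' r x : ℝ} (h : HasDerivAt F F' x)
    (hx : x ∈ Set.Ioo (-r) r) (h0 : ∀ y ∈ Set.Ioo (-r) r, F y = 0) : F' = 0 := by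
  refine h.unique ((hasDerivAt_const x (0 : ℝ)).congr_of_eventuallyEq ?_)
  filter_upwards [isOpen_Ioo.mem_nhds hx] with y hy using h0 y hy

theorem core (g g1 g2 g3 : ℝ → ℝ) (δ a b c : ℝ → ℝ) (t r : ℝ) (hr : 0 < r)
    (e0 : ∀ x, HasDerivAt g (g1 x) x) (e1 : ∀ x, HasDerivAt g1 (g2 x) x)
    (e2 : ∀ x, HasDerivAt g2 (g3 x) x)
    (v1 : g1 t = 0) (v2 : g2 t = -1) (v3 : g3 t = 0)
    (k0 : ∀ x ∈ Set.Ioo (-r) r, HasDerivAt δ (a x) x)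
    (k1 : ∀ x ∈ Set.Ioo (-r) r, HasDerivAt a (b x) x)
    (k2 : ∀ x ∈ Set.Ioo (-r) r, HasDerivAt b (c x) x) (hδ0 : δ 0 = 0)
    (h : ∀ x ∈ Set.Ioo (-r) r, g (t + δ x) - g (t - x) = 0) :
    a 0 ^ 2 = 1 ∧ b 0 = 0 := by
  have z : (0 : ℝ) ∈ Set.Ioo (-r) r := ⟨by linarith, hr⟩
  have m : ∀ x, HasDerivAt (fun x : ℝ => t - x) (-1) x := fun x => by
    simpa using (hasDerivAt_id x).const_sub t
  have p : ∀ x ∈ Set.Ioo (-r) r, HasDerivAt (fun x : ℝ => t + δ x) (a x) x := fun x hx =>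
    (k0 x hx).const_add t
  have h1 : ∀ x ∈ Set.Ioo (-r) r, g1 (t + δ x) * a x - g1 (t - x) * (-1) = 0 := fun x hx =>
    deriv_zero_of_zero (((e0 _).comp x (p x hx)).sub ((e0 _).comp x (m x))) hx h
  have h2 : ∀ x ∈ Set.Ioo (-r) r, (g2 (t + δ x) * a x) * a x + g1 (t + δ x) * b x
      - (g2 (t - x) * (-1)) * (-1) = 0 := fun x hx =>
    deriv_zero_of_zero ((((e1 _).comp x (p x hx)).mul (k1 x hx)).sub
      (((e1 _).comp x (m x)).mul_const (-1))) hx h1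
  have h3 := deriv_zero_of_zero ((((((e2 _).comp 0 (p 0 z)).mul (k1 0 z)).mul (k1 0 z)).add
      (((e1 _).comp 0 (p 0 z)).mul (k2 0 z))).sub
      ((((e2 _).comp 0 (m 0)).mul_const (-1)).mul_const (-1))) z h2
  have h2' := h2 0 z
  simp only [Function.comp, Pi.mul_apply, hδ0, add_zero, sub_zero, v1, v2, v3] at h2' h3
  have ha : a 0 ^ 2 = 1 := by linarith
  refine ⟨ha, ?_⟩
  have : a 0 * b 0 = 0 := by linarith
  rcases mul_eq_zero.1 this with h | h
  · rw [h] at ha; norm_num at ha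
  · exact h

theorem det2_hasDeriv {c : ℝ → ℝ × ℝ} {c' : ℝ × ℝ} {t : ℝ} (v : ℝ × ℝ) (h : HasDerivAt c c' t) :
    HasDerivAt (fun s => det2 (c s) v) (det2 c' v) t := by
  unfold det2
  exact ((hasDeriv_fst h).mul_const _).sub ((hasDeriv_snd h).mul_const _)

/-- Let `γ` be a smooth plane curve in affine parameterization
(`det(γ',γ'') ≡ 1`), `t₀ ∈ ℝ`, and let `δ : (−r,r) → ℝ` be `C³` with `δ(0) = 0` and
`det(γ(t₀+δ(ε)) − γ(t₀−ε), γ'(t₀)) = 0` on `(−r,r)`.  Then `δ'(0)² = 1` and `δ''(0) = 0`;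
in particular, if `δ'(0) ≥ 0` then `δ(ε) = ε + O(ε³)` as `ε → 0`. -/
theorem stmt_6 (γ : ℝ → ℝ × ℝ) (hγ : ContDiff ℝ (⊤ : ℕ∞) γ)
    (haff : ∀ t, det2 (deriv γ t) (deriv (deriv γ) t) = 1)
    (t₀ r : ℝ) (hr : 0 < r) (δ : ℝ → ℝ)
    (hδ : ContDiffOn ℝ 3 δ (Set.Ioo (-r) r)) (hδ0 : δ 0 = 0)
    (hchord : ∀ ε ∈ Set.Ioo (-r) r,
        det2 (γ (t₀ + δ ε) - γ (t₀ - ε)) (deriv γ t₀) = 0) :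
    deriv δ 0 ^ 2 = 1 ∧ deriv (deriv δ) 0 = 0 ∧
    (0 ≤ deriv δ 0 → (fun ε => δ ε - ε) =O[nhds 0] fun ε => ε ^ 3) := by
  -- the curve
  have hg1 : ContDiff ℝ (⊤ : ℕ∞) (deriv γ) := (contDiff_infty_iff_deriv.1 hγ).2
  have hg2 : ContDiff ℝ (⊤ : ℕ∞) (deriv (deriv γ)) := (contDiff_infty_iff_deriv.1 hg1).2
  have d0 : ∀ t, HasDerivAt γ (deriv γ t) t := fun t =>
    ((contDiff_infty_iff_deriv.1 hγ).1 t).hasDerivAt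
  have d1 : ∀ t, HasDerivAt (deriv γ) (deriv (deriv γ) t) t := fun t =>
    ((contDiff_infty_iff_deriv.1 hg1).1 t).hasDerivAt
  have d2 : ∀ t, HasDerivAt (deriv (deriv γ)) (deriv (deriv (deriv γ)) t) t := fun t =>
    ((contDiff_infty_iff_deriv.1 hg2).1 t).hasDerivAt
  set v := deriv γ t₀ with hv
  have e0 := fun t => det2_hasDeriv v (d0 t)
  have e1 := fun t => det2_hasDeriv v (d1 t)
  have e2 := fun t => det2_hasDeriv v (d2 t)
  have v1 : det2 (deriv γ t₀) v = 0 := by rw [← hv]; unfold det2; ring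
  have v2 : det2 (deriv (deriv γ) t₀) v = -1 := by
    have := haff t₀
    rw [← hv] at this
    unfold det2 at *
    linarith
  have v3 : det2 (deriv (deriv (deriv γ)) t₀) v = 0 := by
    have h := ((hasDeriv_fst (d1 t₀)).mul (hasDeriv_snd (d2 t₀))).sub
      ((hasDeriv_snd (d1 t₀)).mul (hasDeriv_fst (d2 t₀)))
    have h' : HasDerivAt (fun t => det2 (deriv γ t) (deriv (deriv γ) t)) 0 t₀ := by
      have : (fun t => det2 (deriv γ t) (deriv (deriv γ) t)) = fun _ => 1 := funext haff
      rw [this]; exact hasDerivAt_const _ _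
    have := h.unique h'
    rw [← hv] at this
    unfold det2
    linarith
  have hchord' : ∀ ε ∈ Set.Ioo (-r) r,
      det2 (γ (t₀ + δ ε)) v - det2 (γ (t₀ - ε)) v = 0 := by
    intro ε hε
    have := hchord ε hε
    unfold det2 at *
    simp only [Prod.fst_sub, Prod.snd_sub] at this
    linarith
  have q1 : ContDiffOn ℝ 2 (deriv δ) (Set.Ioo (-r) r) :=
    hδ.deriv_of_isOpen isOpen_Ioo (by norm_num)
  have q2 : ContDiffOn ℝ 1 (deriv (deriv δ)) (Set.Ioo (-r) r) :=
    q1.deriv_of_isOpen isOpen_Ioo (by norm_num)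
  have k0 : ∀ x ∈ Set.Ioo (-r) r, HasDerivAt δ (deriv δ x) x := fun x hx =>
    ((hδ.differentiableOn (by norm_num)).differentiableAt (isOpen_Ioo.mem_nhds hx)).hasDerivAt
  have k1 : ∀ x ∈ Set.Ioo (-r) r, HasDerivAt (deriv δ) (deriv (deriv δ) x) x := fun x hx =>
    ((q1.differentiableOn (by norm_num)).differentiableAt (isOpen_Ioo.mem_nhds hx)).hasDerivAt
  have k2 : ∀ x ∈ Set.Ioo (-r) r, HasDerivAt (deriv (deriv δ)) (deriv (deriv (deriv δ)) x) x :=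
    fun x hx =>
    ((q2.differentiableOn (by norm_num)).differentiableAt (isOpen_Ioo.mem_nhds hx)).hasDerivAt
  obtain ⟨A, B⟩ := core _ _ _ _ δ _ _ _ t₀ r hr e0 e1 e2 v1 v2 v3 k0 k1 k2 hδ0 hchord'
  refine ⟨A, B, fun hpos => ?_⟩
  have A' : deriv δ 0 = 1 := by nlinarith
  have z : (0 : ℝ) ∈ Set.Ioo (-r) r := ⟨by linarith, hr⟩
  have O2 : (deriv (deriv δ)) =O[nhds 0] fun x => x ^ 1 := by
    have := (k2 0 z).differentiableAt.isBigO_sub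
    simpa [B] using this
  have O1 := bigO_step (fun x => deriv δ x - 1) _ 1 r hr
    (fun x hx => (k1 x hx).sub_const 1) (by simp [A']) O2
  exact bigO_step (fun x => δ x - x) _ 2 r hr
    (fun x hx => (k0 x hx).sub (hasDerivAt_id x)) (by simp [hδ0]) O1
end

section
/- Let ℓ > 0 and let γ : ℝ → ℝ² be a smooth ℓ-periodic curve parameterized by arc length (‖γ'(s)‖ = 1 for all s), injective on [0, ℓ), whose curvature κ(s) := det(γ'(s), γ''(s)) is strictly positive for all s. Let A = ½·∫₀^ℓ det(γ(s), γ'(s)) ds be the area enclosed by γ. Then (∫₀^ℓ κ(s)^{1/3} ds)³ ≤ 8π²·A, and equality holds if and only if the image of γ is an ellipse, i.e. the image of the unit circle under a map x ↦ Tx + b with T ∈ GL(2,ℝ) and b ∈ ℝ². -/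
open Real

lemma aux_amgm {p q r : ℝ} (hq : 0 < q) (hr : 0 < r) (h : p * q ^ 2 = r ^ 3) :
    3 * r ≤ p + 2 * q := by
  have h1 : 0 ≤ (p + 2 * q - 3 * r) * q ^ 2 := by
    have : (p + 2 * q - 3 * r) * q ^ 2 = (r - q) ^ 2 * (r + 2 * q) := by
      linear_combination h
    rw [this]; positivity
  have := nonneg_of_mul_nonneg_left h1 (by positivity)
  linarith

lemma aux_amgm_eq {p q r : ℝ} (hq : 0 < q) (hr : 0 < r) (h : p * q ^ 2 = r ^ 3)
    (he : p + 2 * q - 3 * r = 0) : p = q := by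
  have : (r - q) ^ 2 * (r + 2 * q) = 0 := by
    have : (p + 2 * q - 3 * r) * q ^ 2 = (r - q) ^ 2 * (r + 2 * q) := by
      linear_combination h
    rw [← this, he, zero_mul]
  have h2 : r + 2 * q ≠ 0 := by positivity
  have h3 : r - q = 0 := by
    rcases mul_eq_zero.1 this with h | h
    · exact pow_eq_zero_iff (two_ne_zero) |>.1 h
    · exact absurd h h2
  linarith

lemma arc_strictMono {X ρ : ℝ → ℝ} (hX : ∀ t, HasDerivAt X (ρ t * cos t) t)
    (hpos : ∀ t, 0 < ρ t) : StrictMonoOn X (Set.Icc (-(π / 2)) (π / 2)) := by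
  apply strictMonoOn_of_deriv_pos (convex_Icc _ _)
  · exact fun t _ => (hX t).continuousAt.continuousWithinAt
  · intro t ht
    rw [interior_Icc] at ht
    rw [(hX t).deriv]
    exact mul_pos (hpos t) (cos_pos_of_mem_Ioo ht)

/-- continuity of `φ * tan` at a zero of `cos` where `φ` vanishes to second order -/
lemma cont_mul_tan {f : ℝ → ℝ} {t : ℝ} (hc : cos t = 0) (h0 : f t = 0)
    (hf : HasDerivAt f 0 t) : ContinuousAt (fun s => f s * tan s) t := by
  have hs : sin t ≠ 0 := by
    intro h
    have := sin_sq_add_cos_sq t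
    rw [h, hc] at this; norm_num at this
  have h1 := hasDerivAt_iff_tendsto_slope.1 hf
  have h2 := hasDerivAt_iff_tendsto_slope.1 (hasDerivAt_cos t)
  have h3 : Filter.Tendsto (fun s => slope f t s / slope cos t s * sin s) (nhdsWithin t {t}ᶜ)
      (nhds (0 / (- sin t) * sin t)) :=
    (h1.div h2 (neg_ne_zero.2 hs)).mul (continuous_sin.continuousAt.tendsto.mono_left nhdsWithin_le_nhds)
  rw [continuousAt_iff_punctured_nhds]
  have e : (0 / (- sin t) * sin t) = f t * tan t := by rw [h0]; simp
  rw [e] at h3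
  refine h3.congr' ?_
  filter_upwards [self_mem_nhdsWithin] with s hs'
  have : s - t ≠ 0 := sub_ne_zero.2 hs'
  rw [slope_def_field, slope_def_field, h0, hc, tan_eq_sin_div_cos, sub_zero, sub_zero,
    div_div_div_cancel_right₀ this]
  ring

lemma arc_core {X ρ : ℝ → ℝ} (hρ : Continuous ρ) (hpos : ∀ t, 0 < ρ t)
    (hX : ∀ t, HasDerivAt X (ρ t * cos t) t) {l : ℝ} (hl : 0 < l) {a b : ℝ}
    (ha : X (-(π / 2)) = a) (hb : X (π / 2) = b) :
    (3 * (∫ t in (-(π / 2))..(π / 2), ρ t ^ ((2:ℝ) / 3)) ≤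
      (l ^ 2)⁻¹ * (∫ t in (-(π / 2))..(π / 2), (2 * X t - a - b) * (ρ t * sin t)) + 2 * l * π) ∧
    (3 * (∫ t in (-(π / 2))..(π / 2), ρ t ^ ((2:ℝ) / 3)) =
      (l ^ 2)⁻¹ * (∫ t in (-(π / 2))..(π / 2), (2 * X t - a - b) * (ρ t * sin t)) + 2 * l * π →
      ∀ t ∈ Set.Ioo (-(π / 2)) (π / 2),
        (X t - a) * (b - X t) * √((X t - a) * (b - X t)) = l ^ 3 * ρ t * cos t ^ 3) := by
  have hpi := pi_pos
  have hlt : -(π / 2) < π / 2 := by linarith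
  have hmono := arc_strictMono hX hpos
  have hab : a < b := by
    rw [← ha, ← hb]
    exact hmono (Set.left_mem_Icc.2 hlt.le) (Set.right_mem_Icc.2 hlt.le) hlt
  have hba : 0 < b - a := by linarith
  have hXc : Continuous X := continuous_iff_continuousAt.2 fun t => (hX t).continuousAt
  set φ : ℝ → ℝ := fun t => (X t - a) * (b - X t) with hφ
  have hφd : ∀ t, HasDerivAt φ ((a + b - 2 * X t) * (ρ t * cos t)) t := by
    intro t
    have := ((hX t).sub_const a).mul ((hX t).const_sub b)
    exact this.congr_deriv (by ring)
  have hφpos : ∀ t ∈ Set.Ioo (-(π / 2)) (π / 2), 0 < φ t := by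
    intro t ht
    have h1 : X (-(π / 2)) < X t :=
      hmono (Set.left_mem_Icc.2 hlt.le) (Set.Ioo_subset_Icc_self ht) ht.1
    have h2 : X t < X (π / 2) :=
      hmono (Set.Ioo_subset_Icc_self ht) (Set.right_mem_Icc.2 hlt.le) ht.2
    rw [ha] at h1; rw [hb] at h2
    exact mul_pos (by linarith) (by linarith)
  set g : ℝ → ℝ := fun t => 3 * ρ t ^ ((2:ℝ) / 3) - (l ^ 2)⁻¹ * ((2 * X t - a - b) * (ρ t * sin t))
    with hg
  have hr : Continuous (fun t => ρ t ^ ((2:ℝ) / 3)) :=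
    hρ.rpow_const fun t => Or.inr (by norm_num)
  have hm : Continuous (fun t => (2 * X t - a - b) * (ρ t * sin t)) := by fun_prop
  have hgc : Continuous g := (hr.const_smul (3:ℝ)).sub (hm.const_smul ((l ^ 2)⁻¹))
  set G : ℝ → ℝ := fun t => (l ^ 2)⁻¹ * (φ t * tan t) +
    2 * l * arcsin ((2 * X t - a - b) / (b - a)) - ∫ s in (-(π / 2))..t, g s with hG
  have hGc : ContinuousOn G (Set.Icc (-(π / 2)) (π / 2)) := by
    have h1 : ContinuousOn (fun t => φ t * tan t) (Set.Icc (-(π / 2)) (π / 2)) := by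
      intro t ht
      apply ContinuousAt.continuousWithinAt
      rcases eq_or_lt_of_le ht.1 with h | h
      · have hc : cos t = 0 := by rw [← h]; simp
        apply cont_mul_tan hc
        · simp [hφ, ← h, ha]
        · have := hφd t; rwa [hc, mul_zero, mul_zero] at this
      rcases eq_or_lt_of_le ht.2 with h' | h'
      · have hc : cos t = 0 := by rw [h']; simp
        apply cont_mul_tan hc
        · simp [hφ, h', hb]
        · have := hφd t; rwa [hc, mul_zero, mul_zero] at this
      · exact (hφd t).continuousAt.mul (continuousAt_tan.2 (cos_pos_of_mem_Ioo ⟨h, h'⟩).ne')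
    have h2 : Continuous (fun t => ∫ s in (-(π / 2))..t, g s) :=
      intervalIntegral.continuous_primitive (fun _ _ => hgc.intervalIntegrable _ _) _
    have h3 : Continuous (fun t => arcsin ((2 * X t - a - b) / (b - a))) :=
      continuous_arcsin.comp (by fun_prop)
    exact ((continuousOn_const.mul h1).add (continuousOn_const.mul h3.continuousOn)).sub
      h2.continuousOn
  have hGd : ∀ t ∈ Set.Ioo (-(π / 2)) (π / 2), HasDerivAt G
      ((l ^ 2)⁻¹ * (φ t / cos t ^ 2) + 2 * (l * (ρ t * cos t / √(φ t))) - 3 * ρ t ^ ((2:ℝ) / 3)) t := by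
    intro t ht
    have hc := cos_pos_of_mem_Ioo ht
    have hp := hφpos t ht
    have h1 := ((hφd t).mul (hasDerivAt_tan hc.ne')).const_mul ((l ^ 2)⁻¹)
    have hw : HasDerivAt (fun t => (2 * X t - a - b) / (b - a)) (2 * (ρ t * cos t) / (b - a)) t :=
      ((((hX t).const_mul 2).sub_const a).sub_const b).div_const (b - a)
    have hsq : 1 - ((2 * X t - a - b) / (b - a)) ^ 2 = (2 / (b - a)) ^ 2 * φ t := by
      simp only [hφ]; field_simp; ring
    have hne : 0 < 1 - ((2 * X t - a - b) / (b - a)) ^ 2 := by rw [hsq]; positivity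
    have habs := abs_lt.1 ((sq_lt_one_iff_abs_lt_one _).1 (by linarith :
      ((2 * X t - a - b) / (b - a)) ^ 2 < 1))
    have h2 := ((hasDerivAt_arcsin habs.1.ne' habs.2.ne).comp t hw).const_mul (2 * l)
    have h3 : HasDerivAt (fun t => ∫ s in (-(π / 2))..t, g s) (g t) t :=
      hgc.integral_hasStrictDerivAt _ t |>.hasDerivAt
    have h4 := (h1.add h2).sub h3
    refine h4.congr_deriv ?_
    rw [hsq, sqrt_mul (by positivity), sqrt_sq (by positivity)]
    have hs : 0 < √(φ t) := sqrt_pos.2 hp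
    simp only [hg, tan_eq_sin_div_cos]
    field_simp
    ring
  have key : ∀ t ∈ Set.Ioo (-(π / 2)) (π / 2), 0 < l * (ρ t * cos t / √(φ t)) ∧
      0 < ρ t ^ ((2:ℝ) / 3) ∧
      (l ^ 2)⁻¹ * (φ t / cos t ^ 2) * (l * (ρ t * cos t / √(φ t))) ^ 2 = (ρ t ^ ((2:ℝ) / 3)) ^ 3 := by
    intro t ht
    have hc := cos_pos_of_mem_Ioo ht
    have hp := hφpos t ht
    have hs : 0 < √(φ t) := sqrt_pos.2 hp
    have hr := hpos t
    refine ⟨by positivity, by positivity, ?_⟩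
    rw [← rpow_natCast (ρ t ^ ((2:ℝ) / 3)), ← rpow_mul hr.le]
    have : (2:ℝ) / 3 * ((3:ℕ):ℝ) = ((2:ℕ):ℝ) := by norm_num
    rw [this, rpow_natCast, mul_pow, div_pow, sq_sqrt hp.le]
    field_simp
  have hGm : MonotoneOn G (Set.Icc (-(π / 2)) (π / 2)) := by
    apply monotoneOn_of_deriv_nonneg (convex_Icc _ _) hGc
    · rw [interior_Icc]
      exact fun t ht => (hGd t ht).differentiableAt.differentiableWithinAt
    · rw [interior_Icc]
      intro t ht
      rw [(hGd t ht).deriv]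
      obtain ⟨k1, k2, k3⟩ := key t ht
      linarith [aux_amgm k1 k2 k3]
  have hint : ∫ s in (-(π / 2))..(π / 2), g s =
      3 * (∫ t in (-(π / 2))..(π / 2), ρ t ^ ((2:ℝ) / 3)) -
      (l ^ 2)⁻¹ * (∫ t in (-(π / 2))..(π / 2), (2 * X t - a - b) * (ρ t * sin t)) := by
    simp only [hg]
    rw [intervalIntegral.integral_sub, intervalIntegral.integral_const_mul,
      intervalIntegral.integral_const_mul]
    · exact (hr.const_smul (3:ℝ)).intervalIntegrable _ _
    · exact (hm.const_smul ((l ^ 2)⁻¹)).intervalIntegrable _ _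
  have hGa : G (-(π / 2)) = - (l * π) := by
    simp only [hG, hφ, ha]
    have : (2 * a - a - b) / (b - a) = -1 := by field_simp; ring
    rw [this, arcsin_neg_one]
    simp; ring
  have hGb : G (π / 2) = l * π - ∫ s in (-(π / 2))..(π / 2), g s := by
    simp only [hG, hφ, hb]
    have : (2 * b - a - b) / (b - a) = 1 := by field_simp; ring
    rw [this, arcsin_one]
    simp; ring
  constructor
  · have := hGm (Set.left_mem_Icc.2 hlt.le) (Set.right_mem_Icc.2 hlt.le) hlt.le
    rw [hGa, hGb, hint] at this
    linarith
  · intro he t ht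
    have hend : G (π / 2) = G (-(π / 2)) := by rw [hGa, hGb, hint]; linarith
    have hconst : ∀ s ∈ Set.Icc (-(π / 2)) (π / 2), G s = G (-(π / 2)) := by
      intro s hs
      apply le_antisymm
      · rw [← hend]; exact hGm hs (Set.right_mem_Icc.2 hlt.le) hs.2
      · exact hGm (Set.left_mem_Icc.2 hlt.le) hs hs.1
    have hd0 : HasDerivAt G 0 t := by
      apply (hasDerivAt_const t (G (-(π / 2)))).congr_of_eventuallyEq
      filter_upwards [Icc_mem_nhds ht.1 ht.2] with s hs using hconst s hs
    have hz := (hGd t ht).unique hd0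
    obtain ⟨k1, k2, k3⟩ := key t ht
    have h := aux_amgm_eq k1 k2 k3 hz
    have hc := cos_pos_of_mem_Ioo ht
    have hp := hφpos t ht
    have hs : 0 < √(φ t) := sqrt_pos.2 hp
    change φ t * √(φ t) = _
    field_simp at h
    linear_combination h

lemma arc_ellipse {X Y ρ : ℝ → ℝ} (hpos : ∀ t, 0 < ρ t)
    (hX : ∀ t, HasDerivAt X (ρ t * cos t) t) (hY : ∀ t, HasDerivAt Y (ρ t * sin t) t)
    {l : ℝ} (hl : 0 < l) {a b : ℝ}
    (ha : X (-(π / 2)) = a) (hb : X (π / 2) = b)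
    (h : ∀ t ∈ Set.Ioo (-(π / 2)) (π / 2),
        (X t - a) * (b - X t) * √((X t - a) * (b - X t)) = l ^ 3 * ρ t * cos t ^ 3) :
    ∃ α β : ℝ, ∀ t ∈ Set.Icc (-(π / 2)) (π / 2),
      Y t = α * X t + β - 4 * l ^ 3 / (b - a) ^ 2 * √((X t - a) * (b - X t)) := by
  have hpi := pi_pos
  have hlt : -(π / 2) < π / 2 := by linarith
  have hmono := arc_strictMono hX hpos
  have hab : a < b := by
    rw [← ha, ← hb]
    exact hmono (Set.left_mem_Icc.2 hlt.le) (Set.right_mem_Icc.2 hlt.le) hlt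
  have hba : 0 < b - a := by linarith
  have hXc : Continuous X := continuous_iff_continuousAt.2 fun t => (hX t).continuousAt
  have hYc : Continuous Y := continuous_iff_continuousAt.2 fun t => (hY t).continuousAt
  set φ : ℝ → ℝ := fun t => (X t - a) * (b - X t) with hφ
  have hφd : ∀ t, HasDerivAt φ ((a + b - 2 * X t) * (ρ t * cos t)) t := by
    intro t
    have := ((hX t).sub_const a).mul ((hX t).const_sub b)
    exact this.congr_deriv (by ring)
  have hφpos : ∀ t ∈ Set.Ioo (-(π / 2)) (π / 2), 0 < φ t := by
    intro t ht
    have h1 : X (-(π / 2)) < X t :=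
      hmono (Set.left_mem_Icc.2 hlt.le) (Set.Ioo_subset_Icc_self ht) ht.1
    have h2 : X t < X (π / 2) :=
      hmono (Set.Ioo_subset_Icc_self ht) (Set.right_mem_Icc.2 hlt.le) ht.2
    rw [ha] at h1; rw [hb] at h2
    exact mul_pos (by linarith) (by linarith)
  set c := 4 * l ^ 3 / (b - a) ^ 2 with hc
  have hsd : ∀ t ∈ Set.Ioo (-(π / 2)) (π / 2), HasDerivAt (fun t => √(φ t))
      ((a + b - 2 * X t) * (ρ t * cos t) / (2 * √(φ t))) t := fun t ht =>
    (hφd t).sqrt (hφpos t ht).ne'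
  -- slope function
  set M : ℝ → ℝ := fun t => tan t + c * ((a + b - 2 * X t) / (2 * √(φ t))) with hM
  have hMd : ∀ t ∈ Set.Ioo (-(π / 2)) (π / 2), HasDerivAt M 0 t := by
    intro t ht
    have hcos := cos_pos_of_mem_Ioo ht
    have hp := hφpos t ht
    have hs : 0 < √(φ t) := sqrt_pos.2 hp
    have h1 := (hasDerivAt_tan hcos.ne').add
      (((((hX t).const_mul 2).const_sub (a + b)).div ((hsd t ht).const_mul 2)
        (by positivity)).const_mul c)
    refine h1.congr_deriv ?_
    have e := h t ht
    change φ t * √(φ t) = _ at e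
    have e2 : √(φ t) ^ 2 = φ t := sq_sqrt hp.le
    have e3 : 4 * φ t + (a + b - 2 * X t) ^ 2 = (b - a) ^ 2 := by simp only [hφ]; ring
    rw [hc]
    generalize √(φ t) = w at *
    generalize φ t = f at *
    subst e2
    have hw : w ≠ 0 := hs.ne'
    field_simp
    have e4 : w ^ 3 = l ^ 3 * ρ t * cos t ^ 3 := by rw [← e]; ring
    have : w ^ 3 * (b - a) ^ 2 - l ^ 3 * ρ t * cos t ^ 3 * (4 * w ^ 2 + (a + b - 2 * X t) ^ 2) = 0 := by
      rw [e3, e4]; ring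
    first
      | linear_combination this
      | linear_combination 2 * this
      | linear_combination 4 * this
  have h0 : (0:ℝ) ∈ Set.Ioo (-(π / 2)) (π / 2) := ⟨by linarith, by linarith⟩
  have hMc : ∀ t ∈ Set.Ioo (-(π / 2)) (π / 2), M t = M 0 := by
    intro t ht
    exact (isOpen_Ioo).is_const_of_deriv_eq_zero isPreconnected_Ioo
      (fun s hs => (hMd s hs).differentiableAt.differentiableWithinAt)
      (fun s hs => (hMd s hs).deriv) ht h0
  set N : ℝ → ℝ := fun t => Y t + c * √(φ t) - M 0 * X t with hN
  have hNd : ∀ t ∈ Set.Ioo (-(π / 2)) (π / 2), HasDerivAt N 0 t := by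
    intro t ht
    have hcos := cos_pos_of_mem_Ioo ht
    have hs : 0 < √(φ t) := sqrt_pos.2 (hφpos t ht)
    have h1 := ((hY t).add ((hsd t ht).const_mul c)).sub ((hX t).const_mul (M 0))
    refine h1.congr_deriv ?_
    rw [← hMc t ht]
    simp only [hM, tan_eq_sin_div_cos]
    field_simp
    ring
  have hNc : Continuous N := by
    have : Continuous φ := by fun_prop
    fun_prop
  refine ⟨M 0, N 0, ?_⟩
  have hN0 : ∀ t ∈ Set.Ioo (-(π / 2)) (π / 2), N t = N 0 := by
    intro t ht
    exact (isOpen_Ioo).is_const_of_deriv_eq_zero isPreconnected_Ioo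
      (fun s hs => (hNd s hs).differentiableAt.differentiableWithinAt)
      (fun s hs => (hNd s hs).deriv) ht h0
  have hcl : ∀ t ∈ Set.Icc (-(π / 2)) (π / 2), N t = N 0 := by
    have : Set.EqOn N (fun _ => N 0) (closure (Set.Ioo (-(π / 2)) (π / 2))) :=
      Set.EqOn.closure (fun t ht => hN0 t ht) hNc continuous_const
    rw [closure_Ioo hlt.ne] at this
    exact this
  intro t ht
  have := hcl t ht
  change Y t + c * √(φ t) - M 0 * X t = N 0 at this
  change Y t = M 0 * X t + N 0 - c * √(φ t)
  linarith
lemma exists_cont_inv {f : ℝ → ℝ} {p q : ℝ} (hpq : p ≤ q) (hf : ContinuousOn f (Set.Icc p q))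
    (hm : StrictMonoOn f (Set.Icc p q)) :
    ∃ g : ℝ → ℝ, Continuous g ∧ (∀ c, g c ∈ Set.Icc p q) ∧
      (∀ c ∈ Set.Icc (f p) (f q), f (g c) = c) := by
  have him : f '' (Set.Icc p q) = Set.Icc (f p) (f q) := by
    apply Set.Subset.antisymm
    · rintro _ ⟨s, hs, rfl⟩
      exact ⟨hm.monotoneOn (Set.left_mem_Icc.2 hpq) hs hs.1,
        hm.monotoneOn hs (Set.right_mem_Icc.2 hpq) hs.2⟩
    · exact intermediate_value_Icc hpq hf
  have hle : f p ≤ f q := hm.monotoneOn (Set.left_mem_Icc.2 hpq) (Set.right_mem_Icc.2 hpq) hpq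
  let e := hm.orderIso
  have : Set.OrdConnected (f '' (Set.Icc p q)) := by rw [him]; exact Set.ordConnected_Icc
  have hc : Continuous e.symm := e.symm.continuous
  refine ⟨fun c => (e.symm ⟨(Set.projIcc (f p) (f q) hle c : ℝ), by
    rw [him]; exact (Set.projIcc (f p) (f q) hle c).2⟩ : Set.Icc p q), ?_, ?_, ?_⟩
  · exact continuous_subtype_val.comp (hc.comp
      (Continuous.subtype_mk (continuous_subtype_val.comp continuous_projIcc) _))
  · intro c; exact Subtype.coe_prop _
  · intro c hcm
    have h2 : ∀ z : f '' (Set.Icc p q), f ((e.symm z : Set.Icc p q) : ℝ) = z := by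
      intro z
      have : ((e (e.symm z) : f '' (Set.Icc p q)) : ℝ) = z := by rw [e.apply_symm_apply]
      exact this
    rw [h2]
    simp [Set.projIcc_of_mem hle hcm]

lemma sign_of_ne {f : ℝ → ℝ} {s : Set ℝ} (hs : IsPreconnected s) (hf : ContinuousOn f s)
    (hne : ∀ c ∈ s, f c ≠ 0) {c₀ : ℝ} (h₀ : c₀ ∈ s) (hp : 0 < f c₀) : ∀ c ∈ s, 0 < f c := by
  intro c hc
  by_contra hn
  obtain ⟨z, hz, hz0⟩ := hs.intermediate_value hc h₀ hf (Set.mem_Icc.2 ⟨not_lt.1 hn, hp.le⟩)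
  exact hne z hz hz0

lemma no_double {X Y ρ : ℝ → ℝ} (hpos : ∀ t, 0 < ρ t)
    (hX : ∀ t, HasDerivAt X (ρ t * cos t) t) (hY : ∀ t, HasDerivAt Y (ρ t * sin t) t)
    (hinj : ∀ s ∈ Set.Icc (-(π / 2)) (5 * π / 2), ∀ t ∈ Set.Icc (-(π / 2)) (5 * π / 2),
      X s = X t → Y s = Y t → s = t)
    (h1 : X (-(π / 2)) ≤ X (3 * π / 2)) (h2 : X (π / 2) ≤ X (5 * π / 2)) : False := by
  have hpi := pi_pos
  have hXc : Continuous X := continuous_iff_continuousAt.2 fun t => (hX t).continuousAt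
  have hYc : Continuous Y := continuous_iff_continuousAt.2 fun t => (hY t).continuousAt
  have m1 : StrictMonoOn X (Set.Icc (-(π / 2)) (π / 2)) := arc_strictMono hX hpos
  have m2 : StrictMonoOn (fun t => - X t) (Set.Icc (π / 2) (3 * π / 2)) := by
    apply strictMonoOn_of_deriv_pos (convex_Icc _ _) hXc.neg.continuousOn
    intro t ht
    rw [interior_Icc] at ht
    rw [(hX t).neg.deriv]
    have : cos t < 0 := cos_neg_of_pi_div_two_lt_of_lt ht.1 (by linarith [ht.2])
    nlinarith [hpos t]
  have m3 : StrictMonoOn X (Set.Icc (3 * π / 2) (5 * π / 2)) := by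
    apply strictMonoOn_of_deriv_pos (convex_Icc _ _) hXc.continuousOn
    intro t ht
    rw [interior_Icc] at ht
    rw [(hX t).deriv]
    have : 0 < cos t := by
      rw [← cos_sub_two_pi]
      exact cos_pos_of_mem_Ioo ⟨by linarith [ht.1], by linarith [ht.2]⟩
    exact mul_pos (hpos t) this
  have n1 : StrictMonoOn Y (Set.Icc 0 π) := by
    apply strictMonoOn_of_deriv_pos (convex_Icc _ _) hYc.continuousOn
    intro t ht
    rw [interior_Icc] at ht
    rw [(hY t).deriv]
    exact mul_pos (hpos t) (sin_pos_of_mem_Ioo ht)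
  have n2 : StrictAntiOn Y (Set.Icc π (2 * π)) := by
    apply strictAntiOn_of_deriv_neg (convex_Icc _ _) hYc.continuousOn
    intro t ht
    rw [interior_Icc] at ht
    rw [(hY t).deriv]
    have : sin t < 0 := by
      rw [← sin_sub_two_pi]
      exact sin_neg_of_neg_of_neg_pi_lt (by linarith [ht.2]) (by linarith [ht.1])
    nlinarith [hpos t]
  obtain ⟨α, αc, αm, αe⟩ := exists_cont_inv (by linarith) hXc.continuousOn m1
  obtain ⟨β', βc', βm', βe'⟩ := exists_cont_inv (by linarith) hXc.neg.continuousOn m2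
  obtain ⟨δ, δc, δm, δe⟩ := exists_cont_inv (by linarith) hXc.continuousOn m3
  set a := X (3 * π / 2) with ha
  set b := X (π / 2) with hb
  set β : ℝ → ℝ := fun c => β' (-c) with hβ
  have βc : Continuous β := βc'.comp continuous_neg
  have βm : ∀ c, β c ∈ Set.Icc (π / 2) (3 * π / 2) := fun c => βm' _
  have βe : ∀ c ∈ Set.Icc a b, X (β c) = c := by
    intro c hc
    have := βe' (-c) ⟨neg_le_neg hc.2, neg_le_neg hc.1⟩
    exact neg_injective this
  have αe' : ∀ c ∈ Set.Icc a b, X (α c) = c := fun c hc => αe c ⟨h1.trans hc.1, hc.2⟩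
  have δe' : ∀ c ∈ Set.Icc a b, X (δ c) = c := fun c hc => δe c ⟨hc.1, hc.2.trans h2⟩
  have hab : a < b := by
    have := m2 (Set.left_mem_Icc.2 (by linarith)) (Set.right_mem_Icc.2 (by linarith))
      (by linarith : π / 2 < 3 * π / 2)
    simp only at this
    linarith
  have αJ : ∀ c, α c ∈ Set.Icc (-(π / 2)) (5 * π / 2) :=
    fun c => ⟨(αm c).1, by linarith [(αm c).2]⟩
  have βJ : ∀ c, β c ∈ Set.Icc (-(π / 2)) (5 * π / 2) :=
    fun c => ⟨by linarith [(βm c).1], by linarith [(βm c).2]⟩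
  have δJ : ∀ c, δ c ∈ Set.Icc (-(π / 2)) (5 * π / 2) :=
    fun c => ⟨by linarith [(δm c).1], by linarith [(δm c).2]⟩
  -- equality of parameters
  have αlt : ∀ c ∈ Set.Ico a b, α c < π / 2 := by
    intro c hc
    refine lt_of_le_of_ne (αm c).2 fun h => ?_
    have := αe' c ⟨hc.1, hc.2.le⟩
    rw [h] at this
    exact hc.2.ne this.symm
  have βgt : ∀ c ∈ Set.Ico a b, π / 2 < β c := by
    intro c hc
    refine lt_of_le_of_ne (βm c).1 fun h => ?_
    have := βe c ⟨hc.1, hc.2.le⟩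
    rw [← h] at this
    exact hc.2.ne this.symm
  have βlt : ∀ c ∈ Set.Ioc a b, β c < 3 * π / 2 := by
    intro c hc
    refine lt_of_le_of_ne (βm c).2 fun h => ?_
    have := βe c ⟨hc.1.le, hc.2⟩
    rw [h] at this
    exact hc.1.ne this
  have δgt : ∀ c ∈ Set.Ioc a b, 3 * π / 2 < δ c := by
    intro c hc
    refine lt_of_le_of_ne (δm c).1 fun h => ?_
    have := δe' c ⟨hc.1.le, hc.2⟩
    rw [← h] at this
    exact hc.1.ne this
  have hBA : ∀ c ∈ Set.Ico a b, 0 < Y (β c) - Y (α c) := by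
    have hne : ∀ c ∈ Set.Ico a b, Y (β c) - Y (α c) ≠ 0 := by
      intro c hc h
      have hc' : c ∈ Set.Icc a b := ⟨hc.1, hc.2.le⟩
      have := hinj _ (βJ c) _ (αJ c) ((βe c hc').trans (αe' c hc').symm) (by linarith)
      linarith [αlt c hc, βgt c hc]
    have hx0 : X 0 < b := m1 ⟨by linarith, by linarith⟩ (Set.right_mem_Icc.2 (by linarith))
      (by linarith)
    have hxp : X π < b := by
      have := m2 (Set.left_mem_Icc.2 (by linarith)) ⟨by linarith, by linarith⟩
        (by linarith : π / 2 < π)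
      simp only at this
      linarith
    set c₀ := max a (max (X 0) (X π)) with hc₀
    have hmem : c₀ ∈ Set.Ico a b := ⟨le_max_left _ _, max_lt hab (max_lt hx0 hxp)⟩
    have hmem' : c₀ ∈ Set.Icc a b := ⟨hmem.1, hmem.2.le⟩
    refine sign_of_ne isPreconnected_Ico
      ((hYc.comp βc).sub (hYc.comp αc)).continuousOn hne hmem ?_
    have q1 : 0 ≤ α c₀ := by
      by_contra hn
      have := m1 (αm c₀) ⟨by linarith, by linarith⟩ (not_le.1 hn)
      rw [αe' _ hmem'] at this
      have : X 0 ≤ c₀ := (le_max_left _ _).trans (le_max_right _ _)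
      linarith
    have q2 : β c₀ ≤ π := by
      by_contra hn
      have := m2 ⟨by linarith, by linarith⟩ (βm c₀) (not_le.1 hn)
      simp only at this
      rw [βe _ hmem'] at this
      have : X π ≤ c₀ := (le_max_right _ _).trans (le_max_right _ _)
      linarith
    have r1 := αlt _ hmem
    have r2 := βgt _ hmem
    have := n1 ⟨q1, by linarith⟩ ⟨by linarith, q2⟩ (r1.trans r2)
    linarith
  have hBD : ∀ c ∈ Set.Ioc a b, 0 < Y (β c) - Y (δ c) := by
    have hne : ∀ c ∈ Set.Ioc a b, Y (β c) - Y (δ c) ≠ 0 := by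
      intro c hc h
      have hc' : c ∈ Set.Icc a b := ⟨hc.1.le, hc.2⟩
      have := hinj _ (βJ c) _ (δJ c) ((βe c hc').trans (δe' c hc').symm) (by linarith)
      linarith [βlt c hc, δgt c hc]
    have hx0 : a < X (2 * π) := m3 (Set.left_mem_Icc.2 (by linarith)) ⟨by linarith, by linarith⟩
      (by linarith)
    have hxp : a < X π := by
      have := m2 ⟨by linarith, by linarith⟩ (Set.right_mem_Icc.2 (by linarith))
        (by linarith : π < 3 * π / 2)
      simp only at this
      linarith
    set c₀ := min b (min (X (2 * π)) (X π)) with hc₀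
    have hmem : c₀ ∈ Set.Ioc a b := ⟨lt_min hab (lt_min hx0 hxp), min_le_left _ _⟩
    have hmem' : c₀ ∈ Set.Icc a b := ⟨hmem.1.le, hmem.2⟩
    refine sign_of_ne isPreconnected_Ioc
      ((hYc.comp βc).sub (hYc.comp δc)).continuousOn hne hmem ?_
    have q1 : δ c₀ ≤ 2 * π := by
      by_contra hn
      have := m3 ⟨by linarith, by linarith⟩ (δm c₀) (not_le.1 hn)
      rw [δe' _ hmem'] at this
      have : c₀ ≤ X (2 * π) := (min_le_right _ _).trans (min_le_left _ _)
      linarith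
    have q2 : π ≤ β c₀ := by
      by_contra hn
      have := m2 (βm c₀) ⟨by linarith, by linarith⟩ (not_le.1 hn)
      simp only at this
      rw [βe _ hmem'] at this
      have : c₀ ≤ X π := (min_le_right _ _).trans (min_le_right _ _)
      linarith
    have r1 := βlt _ hmem
    have r2 := δgt _ hmem
    have := n2 ⟨q2, by linarith⟩ ⟨by linarith, q1⟩ (r1.trans r2)
    linarith
  have hainI : a ∈ Set.Icc a b := ⟨le_rfl, hab.le⟩
  have hbinI : b ∈ Set.Icc a b := ⟨hab.le, le_rfl⟩
  have hne : ∀ c ∈ Set.Icc a b, Y (δ c) - Y (α c) ≠ 0 := by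
    intro c hc h
    have := hinj _ (δJ c) _ (αJ c) ((δe' c hc).trans (αe' c hc).symm) (by linarith)
    linarith [(δm c).1, (αm c).2]
  have eδ : δ a = 3 * π / 2 :=
    m3.injOn (δm a) (Set.left_mem_Icc.2 (by linarith)) (δe' a hainI)
  have eβ : β a = 3 * π / 2 :=
    m2.injOn (βm a) (Set.right_mem_Icc.2 (by linarith)) (congrArg (fun z => -z) (βe a hainI))
  have eα : α b = π / 2 :=
    m1.injOn (αm b) (Set.right_mem_Icc.2 (by linarith)) (αe' b hbinI)
  have eβ' : β b = π / 2 :=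
    m2.injOn (βm b) (Set.left_mem_Icc.2 (by linarith)) (congrArg (fun z => -z) (βe b hbinI))
  have s1 := hBA a ⟨le_rfl, hab⟩
  have s2 := hBD b ⟨hab, le_rfl⟩
  have s3 := sign_of_ne isPreconnected_Icc ((hYc.comp δc).sub (hYc.comp αc)).continuousOn hne
    hainI (by rw [eβ] at s1; change 0 < Y (δ a) - Y (α a); rw [eδ]; exact s1) b hbinI
  change 0 < Y (δ b) - Y (α b) at s3
  rw [eα] at s3
  rw [eβ'] at s2
  linarith

lemma turning_one {X Y ρ : ℝ → ℝ} (hpos : ∀ t, 0 < ρ t)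
    (hX : ∀ t, HasDerivAt X (ρ t * cos t) t) (hY : ∀ t, HasDerivAt Y (ρ t * sin t) t)
    {k : ℕ} (hk : 1 ≤ k)
    (pX : ∀ t, X (t + k * (2 * π)) = X t)
    (hinj : ∀ s t, X s = X t → Y s = Y t → ∃ m : ℤ, s - t = m * (k * (2 * π))) : k = 1 := by
  have hpi := pi_pos
  by_contra hne
  have hk2 : 2 ≤ k := by omega
  have hk2' : (2:ℝ) ≤ k := by exact_mod_cast hk2
  have hinj' : ∀ s t, |s - t| ≤ 3 * π → X s = X t → Y s = Y t → s = t := by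
    intro s t hst h1 h2
    obtain ⟨m, hm⟩ := hinj s t h1 h2
    rcases eq_or_ne m 0 with h | h
    · rw [h] at hm; simp at hm; linarith
    · exfalso
      have : (1:ℝ) ≤ |(m:ℝ)| := by exact_mod_cast Int.one_le_abs h
      rw [hm, abs_mul, abs_of_pos (by positivity : (0:ℝ) < k * (2 * π))] at hst
      have : 4 * π ≤ |(m:ℝ)| * (k * (2 * π)) := by
        have h5 : 4 * π ≤ k * (2 * π) := by nlinarith
        nlinarith
      linarith
  -- minimal local maximum
  obtain ⟨j, hj, hmin⟩ := Finset.exists_min_image (Finset.range k)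
    (fun j : ℕ => X (π / 2 + j * (2 * π))) ⟨0, Finset.mem_range.2 (by omega)⟩
  have pXp : Function.Periodic X (k * (2 * π)) := pX
  have hminZ : ∀ n : ℤ, X (π / 2 + j * (2 * π)) ≤ X (π / 2 + n * (2 * π)) := by
    intro n
    have hkz : (0:ℤ) < k := by exact_mod_cast hk
    have e1 := Int.emod_add_mul_ediv n k
    have e2 := Int.emod_nonneg n hkz.ne'
    have e3 := Int.emod_lt_of_pos n hkz
    obtain ⟨i, hi⟩ := Int.eq_ofNat_of_zero_le e2
    rw [hi] at e1 e3
    have := hmin i (Finset.mem_range.2 (by exact_mod_cast e3))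
    refine this.trans_eq ?_
    have e1' : (n:ℝ) = i + k * ((n / (k:ℤ) : ℤ) : ℝ) := by
      exact_mod_cast e1.symm
    rw [← pXp.int_mul (n / (k:ℤ)) (π / 2 + i * (2 * π)), e1']
    congr 1; ring
  have hper : ∀ t, cos (t + j * (2 * π)) = cos t ∧ sin (t + j * (2 * π)) = sin t :=
    fun t => ⟨cos_add_nat_mul_two_pi t j, sin_add_nat_mul_two_pi t j⟩
  set T : ℝ := j * (2 * π) with hT
  have dX : ∀ t, HasDerivAt (fun t => X (t + T)) (ρ (t + T) * cos t) t := by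
    intro t
    have := (hX (t + T)).comp_add_const t T
    rwa [(hper t).1] at this
  have dY : ∀ t, HasDerivAt (fun t => Y (t + T)) (ρ (t + T) * sin t) t := by
    intro t
    have := (hY (t + T)).comp_add_const t T
    rwa [(hper t).2] at this
  rcases le_total (X (-(π / 2) + T)) (X (3 * π / 2 + T)) with h | h
  · refine no_double (fun t => hpos (t + T)) dX dY ?_ h ?_
    · intro s hs t ht h1 h2
      have := hinj' (s + T) (t + T) (by
        rw [abs_le]; constructor <;> linarith [hs.1, hs.2, ht.1, ht.2]) h1 h2
      linarith
    · have := hminZ (j + 1)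
      convert this using 2
      push_cast; rw [hT]; ring
  · have dX' : ∀ t, HasDerivAt (fun t => X (π - t + T)) (ρ (π - t + T) * cos t) t := by
      intro t
      have := (dX (π - t)).comp_const_sub π t
      rw [cos_pi_sub] at this
      exact this.congr_deriv (by ring)
    have dY' : ∀ t, HasDerivAt (fun t => - Y (π - t + T)) (ρ (π - t + T) * sin t) t := by
      intro t
      have := ((dY (π - t)).comp_const_sub π t).neg
      rw [sin_pi_sub] at this
      exact this.congr_deriv (by ring)
    refine no_double (fun t => hpos (π - t + T)) dX' dY' ?_ ?_ ?_
    · intro s hs t ht h1 h2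
      have := hinj' (π - s + T) (π - t + T) (by
        rw [abs_le]; constructor <;> linarith [hs.1, hs.2, ht.1, ht.2]) h1 (by linarith)
      linarith
    · have q1 : π - -(π / 2) + T = 3 * π / 2 + T := by ring
      have q2 : π - 3 * π / 2 + T = -(π / 2) + T := by ring
      rw [q1, q2]; exact h
    · have := hminZ (j - 1)
      convert this using 2
      · rw [hT]; ring
      · push_cast; rw [hT]; ring
lemma lift_angle {v₁ v₂ τ : ℝ → ℝ} (hτ : Continuous τ)
    (h1 : ∀ s, HasDerivAt v₁ (-(τ s * v₂ s)) s) (h2 : ∀ s, HasDerivAt v₂ (τ s * v₁ s) s)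
    (hu : ∀ s, v₁ s ^ 2 + v₂ s ^ 2 = 1) :
    ∃ θ : ℝ → ℝ, (∀ s, HasDerivAt θ (τ s) s) ∧ (∀ s, v₁ s = cos (θ s)) ∧
      (∀ s, v₂ s = sin (θ s)) := by
  set Θ : ℝ → ℝ := fun s => ∫ r in (0:ℝ)..s, τ r with hΘ
  have hd : ∀ s, HasDerivAt Θ (τ s) s := fun s => (hτ.integral_hasStrictDerivAt 0 s).hasDerivAt
  have hc1 : ∀ s, HasDerivAt (fun s => v₁ s * cos (Θ s) + v₂ s * sin (Θ s)) 0 s := by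
    intro s
    refine (((h1 s).mul (hd s).cos).add ((h2 s).mul (hd s).sin)).congr_deriv ?_
    ring
  have hc2 : ∀ s, HasDerivAt (fun s => v₂ s * cos (Θ s) - v₁ s * sin (Θ s)) 0 s := by
    intro s
    refine (((h2 s).mul (hd s).cos).sub ((h1 s).mul (hd s).sin)).congr_deriv ?_
    ring
  have e1 : ∀ s, v₁ s * cos (Θ s) + v₂ s * sin (Θ s) = v₁ 0 := by
    intro s
    have := is_const_of_deriv_eq_zero (fun s => (hc1 s).differentiableAt)
      (fun s => (hc1 s).deriv) s 0
    simpa [hΘ] using this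
  have e2 : ∀ s, v₂ s * cos (Θ s) - v₁ s * sin (Θ s) = v₂ 0 := by
    intro s
    have := is_const_of_deriv_eq_zero (fun s => (hc2 s).differentiableAt)
      (fun s => (hc2 s).deriv) s 0
    simpa [hΘ] using this
  obtain ⟨w, hw1, hw2⟩ : ∃ w : ℝ, v₁ 0 = cos w ∧ v₂ 0 = sin w := by
    have hn : ‖(⟨v₁ 0, v₂ 0⟩ : ℂ)‖ = 1 := by
      rw [Complex.norm_def, Complex.normSq_mk, sqrt_eq_one]
      linarith [hu 0]
    refine ⟨Complex.arg ⟨v₁ 0, v₂ 0⟩, ?_, ?_⟩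
    · rw [Complex.cos_arg (by rw [← norm_ne_zero_iff, hn]; norm_num), hn]; simp
    · rw [Complex.sin_arg, hn]; simp
  refine ⟨fun s => Θ s + w, fun s => (hd s).add_const w, fun s => ?_, fun s => ?_⟩
  · rw [cos_add, ← hw1, ← hw2, ← e1 s, ← e2 s]
    linear_combination (- v₁ s) * (sin_sq_add_cos_sq (Θ s))
  · rw [sin_add, ← hw1, ← hw2, ← e1 s, ← e2 s]
    linear_combination (- v₂ s) * (sin_sq_add_cos_sq (Θ s))

lemma core_arcs {X Y ρ : ℝ → ℝ} (hρ : Continuous ρ) (hpos : ∀ t, 0 < ρ t)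
    (hX : ∀ t, HasDerivAt X (ρ t * cos t) t) (hY : ∀ t, HasDerivAt Y (ρ t * sin t) t)
    (pX : X (3 * π / 2) = X (-(π / 2))) (pY : Y (3 * π / 2) = Y (-(π / 2)))
    {l : ℝ} (hl : 0 < l) {a b I L : ℝ}
    (ha : X (-(π / 2)) = a) (hb : X (π / 2) = b)
    (hI : I = ∫ t in (-(π / 2))..(3 * π / 2), (X t * (ρ t * sin t) - Y t * (ρ t * cos t)))
    (hL : L = ∫ t in (-(π / 2))..(3 * π / 2), ρ t ^ ((2:ℝ) / 3)) :
    3 * L ≤ (l ^ 2)⁻¹ * I + 4 * l * π ∧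
    (3 * L = (l ^ 2)⁻¹ * I + 4 * l * π →
      (∃ α β : ℝ, ∀ t ∈ Set.Icc (-(π / 2)) (π / 2),
        Y t = α * X t + β - 4 * l ^ 3 / (b - a) ^ 2 * √((X t - a) * (b - X t))) ∧
      (∃ α β : ℝ, ∀ t ∈ Set.Icc (π / 2) (3 * π / 2),
        Y t = α * X t + β + 4 * l ^ 3 / (b - a) ^ 2 * √((X t - a) * (b - X t)))) := by
  have hXc : Continuous X := continuous_iff_continuousAt.2 fun t => (hX t).continuousAt
  have hYc : Continuous Y := continuous_iff_continuousAt.2 fun t => (hY t).continuousAt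
  have hr : Continuous (fun t => ρ t ^ ((2:ℝ) / 3)) :=
    hρ.rpow_const fun t => Or.inr (by norm_num)
  have hm : Continuous (fun t => (2 * X t - a - b) * (ρ t * sin t)) := by fun_prop
  have hI2 : I = ∫ t in (-(π / 2))..(3 * π / 2), (2 * X t - a - b) * (ρ t * sin t) := by
    rw [hI, ← sub_eq_zero, ← intervalIntegral.integral_sub]
    · have hd : ∀ t, HasDerivAt (fun t => (a + b) * Y t - X t * Y t)
          (X t * (ρ t * sin t) - Y t * (ρ t * cos t) - (2 * X t - a - b) * (ρ t * sin t)) t := by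
        intro t
        refine (((hY t).const_mul (a + b)).sub ((hX t).mul (hY t))).congr_deriv ?_
        ring
      rw [intervalIntegral.integral_eq_sub_of_hasDerivAt (fun t _ => hd t)]
      · rw [pX, pY]; ring
      · exact Continuous.intervalIntegrable (by fun_prop) _ _
    · exact Continuous.intervalIntegrable (by fun_prop) _ _
    · exact hm.intervalIntegrable _ _
  set X' : ℝ → ℝ := fun t => - X (t + π) with hX'
  set Y' : ℝ → ℝ := fun t => - Y (t + π) with hY'
  set ρ' : ℝ → ℝ := fun t => ρ (t + π) with hρ'
  have dX : ∀ t, HasDerivAt X' (ρ' t * cos t) t := by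
    intro t
    have := ((hX (t + π)).comp_add_const t π).neg
    rw [cos_add_pi] at this
    exact this.congr_deriv (by simp only [hρ']; ring)
  have dY : ∀ t, HasDerivAt Y' (ρ' t * sin t) t := by
    intro t
    have := ((hY (t + π)).comp_add_const t π).neg
    rw [sin_add_pi] at this
    exact this.congr_deriv (by simp only [hρ']; ring)
  have z1 : -(π / 2) + π = π / 2 := by ring
  have z2 : π / 2 + π = 3 * π / 2 := by ring
  have ha' : X' (-(π / 2)) = -b := by simp only [hX']; rw [z1, hb]
  have hb' : X' (π / 2) = -a := by simp only [hX']; rw [z2, pX, ha]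
  have hρc' : Continuous ρ' := hρ.comp (continuous_add_const π)
  obtain ⟨A1, A2⟩ := arc_core hρ hpos hX hl ha hb
  obtain ⟨B1, B2⟩ := arc_core hρc' (fun t => hpos _) dX hl ha' hb'
  have i1 : ∫ t in (-(π / 2))..(π / 2), ρ' t ^ ((2:ℝ) / 3) =
      ∫ t in (π / 2)..(3 * π / 2), ρ t ^ ((2:ℝ) / 3) := by
    have := intervalIntegral.integral_comp_add_right (a := -(π / 2)) (b := π / 2)
      (fun t => ρ t ^ ((2:ℝ) / 3)) π
    rw [z1, z2] at this
    exact this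
  have i2 : ∫ t in (-(π / 2))..(π / 2), (2 * X' t - (-b) - (-a)) * (ρ' t * sin t) =
      ∫ t in (π / 2)..(3 * π / 2), (2 * X t - a - b) * (ρ t * sin t) := by
    have := intervalIntegral.integral_comp_add_right (a := -(π / 2)) (b := π / 2)
      (fun t => (2 * X t - a - b) * (ρ t * sin t)) π
    rw [z1, z2] at this
    rw [← this]
    congr 1
    funext t
    simp only [hX', hρ', sin_add_pi]
    ring
  rw [i1, i2] at B1 B2
  have j1 := intervalIntegral.integral_add_adjacent_intervals
    (hr.intervalIntegrable (μ := MeasureTheory.volume) (-(π / 2)) (π / 2))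
    (hr.intervalIntegrable (π / 2) (3 * π / 2))
  have j2 := intervalIntegral.integral_add_adjacent_intervals
    (hm.intervalIntegrable (μ := MeasureTheory.volume) (-(π / 2)) (π / 2))
    (hm.intervalIntegrable (π / 2) (3 * π / 2))
  rw [← hL] at j1
  rw [← hI2] at j2
  rw [← j1, ← j2]
  refine ⟨by linarith, fun he => ⟨?_, ?_⟩⟩
  · exact arc_ellipse hpos hX hY hl ha hb (A2 (by linarith))
  · obtain ⟨α, β, h⟩ := arc_ellipse (fun t => hpos _) dX dY hl ha' hb' (B2 (by linarith))
    refine ⟨α, -β, fun t ht => ?_⟩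
    have := h (t - π) ⟨by linarith [ht.1], by linarith [ht.2]⟩
    simp only [hX', hY', sub_add_cancel] at this
    have e1 : (-X t - -b) * (-a - -X t) = (X t - a) * (b - X t) := by ring
    have e2 : (-a - -b) = b - a := by ring
    rw [e1, e2] at this
    linarith

lemma ellipse_image {X Y ρ : ℝ → ℝ} (hpos : ∀ t, 0 < ρ t)
    (hX : ∀ t, HasDerivAt X (ρ t * cos t) t)
    (pX : X (3 * π / 2) = X (-(π / 2))) (pY : Y (3 * π / 2) = Y (-(π / 2)))
    {a b c : ℝ} (ha : X (-(π / 2)) = a) (hb : X (π / 2) = b) (hc : 0 < c)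
    (h1 : ∃ α β : ℝ, ∀ t ∈ Set.Icc (-(π / 2)) (π / 2),
        Y t = α * X t + β - c * √((X t - a) * (b - X t)))
    (h2 : ∃ α β : ℝ, ∀ t ∈ Set.Icc (π / 2) (3 * π / 2),
        Y t = α * X t + β + c * √((X t - a) * (b - X t))) :
    ∃ (T : (ℝ × ℝ) ≃ₗ[ℝ] (ℝ × ℝ)) (d : ℝ × ℝ),
      (fun t => (X t, Y t)) '' Set.Icc (-(π / 2)) (3 * π / 2) =
        (fun q => T q + d) '' {q : ℝ × ℝ | q.1 ^ 2 + q.2 ^ 2 = 1} := by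
  have hpi := pi_pos
  have hXc : Continuous X := continuous_iff_continuousAt.2 fun t => (hX t).continuousAt
  have m1 : StrictMonoOn X (Set.Icc (-(π / 2)) (π / 2)) := arc_strictMono hX hpos
  have m2 : StrictAntiOn X (Set.Icc (π / 2) (3 * π / 2)) := by
    apply strictAntiOn_of_deriv_neg (convex_Icc _ _) hXc.continuousOn
    intro t ht
    rw [interior_Icc] at ht
    rw [(hX t).deriv]
    have : cos t < 0 := cos_neg_of_pi_div_two_lt_of_lt ht.1 (by linarith [ht.2])
    nlinarith [hpos t]
  have hab : a < b := by
    rw [← ha, ← hb]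
    exact m1 (Set.left_mem_Icc.2 (by linarith)) (Set.right_mem_Icc.2 (by linarith)) (by linarith)
  obtain ⟨α, β, h1⟩ := h1
  obtain ⟨α', β', h2⟩ := h2
  have q1 := h1 (-(π / 2)) ⟨le_rfl, by linarith⟩
  have q2 := h1 (π / 2) ⟨by linarith, le_rfl⟩
  have q3 := h2 (π / 2) ⟨le_rfl, by linarith⟩
  have q4 := h2 (3 * π / 2) ⟨by linarith, le_rfl⟩
  rw [pX, pY] at q4
  rw [ha] at q1 q4
  rw [hb] at q2 q3
  simp only [sub_self, mul_zero, zero_mul, sqrt_zero, sub_zero, add_zero] at q1 q2 q3 q4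
  have eα : α = α' := by
    have : (α - α') * (b - a) = 0 := by linarith
    rcases mul_eq_zero.1 this with h | h <;> linarith
  have eβ : β = β' := by rw [eα] at q1; linarith
  subst eα eβ
  set r := (b - a) / 2 with hr
  set m := (a + b) / 2 with hm
  have hr0 : 0 < r := by rw [hr]; linarith
  have hphi : ∀ x, (x - a) * (b - x) = r ^ 2 - (x - m) ^ 2 := by
    intro x; rw [hr, hm]; ring
  have hXm : ∀ t ∈ Set.Icc (-(π / 2)) (3 * π / 2), 0 ≤ (X t - a) * (b - X t) := by
    intro t ht
    rcases le_total t (π / 2) with h | h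
    · have u1 := m1.monotoneOn (Set.left_mem_Icc.2 (by linarith)) ⟨ht.1, h⟩ ht.1
      have u2 := m1.monotoneOn ⟨ht.1, h⟩ (Set.right_mem_Icc.2 (by linarith)) h
      exact mul_nonneg (by linarith) (by linarith)
    · have u1 := m2.antitoneOn (Set.left_mem_Icc.2 (by linarith)) ⟨h, ht.2⟩ h
      have u2 := m2.antitoneOn ⟨h, ht.2⟩ (Set.right_mem_Icc.2 (by linarith)) ht.2
      exact mul_nonneg (by linarith) (by linarith)
  have hcr : c * r ≠ 0 := by positivity
  let T : (ℝ × ℝ) ≃ₗ[ℝ] (ℝ × ℝ) :=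
    { toFun := fun q => (r * q.1, α * (r * q.1) + c * r * q.2)
      invFun := fun p => (p.1 / r, (p.2 - α * p.1) / (c * r))
      map_add' := by intro p q; ext <;> simp <;> ring
      map_smul' := by intro k q; ext <;> simp <;> ring
      left_inv := by
        intro q
        ext
        · simp only; field_simp
        · simp only; field_simp; ring
      right_inv := by
        intro q
        ext
        · simp only; field_simp
        · simp only; field_simp; ring }
  have hT : ∀ q : ℝ × ℝ, T q = (r * q.1, α * (r * q.1) + c * r * q.2) := fun q => rfl
  refine ⟨T, (m, α * m + β), ?_⟩
  ext ⟨x, y⟩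
  simp only [Set.mem_image, Set.mem_setOf_eq, hT, Prod.mk_add_mk, Prod.mk.injEq, Prod.exists]
  constructor
  · rintro ⟨t, ht, rfl, rfl⟩
    have hs := sq_sqrt (hXm t ht)
    rw [hphi] at hs
    rcases le_total t (π / 2) with h | h
    · refine ⟨(X t - m) / r, - √((X t - a) * (b - X t)) / r, ?_, ?_, ?_⟩
      · rw [hphi]; field_simp; rw [hs]; ring
      · field_simp; ring
      · rw [h1 t ⟨ht.1, h⟩]; field_simp; ring
    · refine ⟨(X t - m) / r, √((X t - a) * (b - X t)) / r, ?_, ?_, ?_⟩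
      · rw [hphi]; field_simp; rw [hs]; ring
      · field_simp; ring
      · rw [h2 t ⟨h, ht.2⟩]; field_simp; ring
  · rintro ⟨p, q, hpq, rfl, rfl⟩
    have hp : |p| ≤ 1 := by
      rw [← sq_le_one_iff_abs_le_one]; nlinarith [sq_nonneg q]
    have hp1 := (abs_le.1 hp).1
    have hp2 := (abs_le.1 hp).2
    have hxa : a ≤ r * p + m := by
      have : m = a + r := by rw [hr, hm]; ring
      nlinarith
    have hxb : r * p + m ≤ b := by
      have : m = b - r := by rw [hr, hm]; ring
      nlinarith
    have hsq : (r * p + m - a) * (b - (r * p + m)) = (r * q) ^ 2 := by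
      rw [hphi]; linear_combination (- r ^ 2) * hpq
    rcases le_total q 0 with h | h
    · obtain ⟨t, ht, hxt⟩ := intermediate_value_Icc (by linarith : -(π / 2) ≤ π / 2)
        hXc.continuousOn (show r * p + m ∈ Set.Icc (X (-(π / 2))) (X (π / 2)) by
          rw [ha, hb]; exact ⟨hxa, hxb⟩)
      refine ⟨t, ⟨ht.1, by linarith [ht.2]⟩, hxt, ?_⟩
      rw [h1 t ht, hxt, hsq, sqrt_sq_eq_abs, abs_of_nonpos (by nlinarith)]
      ring
    · obtain ⟨t, ht, hxt⟩ := intermediate_value_Icc' (by linarith : π / 2 ≤ 3 * π / 2)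
        hXc.continuousOn (show r * p + m ∈ Set.Icc (X (3 * π / 2)) (X (π / 2)) by
          rw [pX, ha, hb]; exact ⟨hxa, hxb⟩)
      refine ⟨t, ⟨by linarith [ht.1], ht.2⟩, hxt, ?_⟩
      rw [h2 t ht, hxt, hsq, sqrt_sq_eq_abs, abs_of_nonneg (by positivity)]
      ring

lemma core_theta {X Y ρ : ℝ → ℝ} (hρ : Continuous ρ) (hpos : ∀ t, 0 < ρ t)
    (hX : ∀ t, HasDerivAt X (ρ t * cos t) t) (hY : ∀ t, HasDerivAt Y (ρ t * sin t) t)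
    (pX : X (3 * π / 2) = X (-(π / 2))) (pY : Y (3 * π / 2) = Y (-(π / 2)))
    {A L : ℝ}
    (hA : A = 1 / 2 * ∫ t in (-(π / 2))..(3 * π / 2), (X t * (ρ t * sin t) - Y t * (ρ t * cos t)))
    (hL : L = ∫ t in (-(π / 2))..(3 * π / 2), ρ t ^ ((2:ℝ) / 3)) :
    L ^ 3 ≤ 8 * π ^ 2 * A ∧ (L ^ 3 = 8 * π ^ 2 * A →
    ∃ (T : (ℝ × ℝ) ≃ₗ[ℝ] (ℝ × ℝ)) (d : ℝ × ℝ),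
      (fun t => (X t, Y t)) '' Set.Icc (-(π / 2)) (3 * π / 2) =
        (fun q => T q + d) '' {q : ℝ × ℝ | q.1 ^ 2 + q.2 ^ 2 = 1}) := by
  have hpi := pi_pos
  have hr : Continuous (fun t => ρ t ^ ((2:ℝ) / 3)) :=
    hρ.rpow_const fun t => Or.inr (by norm_num)
  have hLpos : 0 < L := by
    rw [hL]
    exact intervalIntegral.intervalIntegral_pos_of_pos (hr.intervalIntegrable _ _)
      (fun t => rpow_pos_of_pos (hpos t) _) (by linarith)
  have hI : 2 * A = ∫ t in (-(π / 2))..(3 * π / 2),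
    (X t * (ρ t * sin t) - Y t * (ρ t * cos t)) := by rw [hA]; ring
  have key := fun (l : ℝ) (hl : 0 < l) => core_arcs hρ hpos hX hY pX pY hl rfl rfl hI hL
  have hApos : 0 < A := by
    by_contra hn
    have h := (key (L / (4 * π)) (by positivity)).1
    have h1 : ((L / (4 * π)) ^ 2)⁻¹ * (2 * A) ≤ 0 :=
      mul_nonpos_of_nonneg_of_nonpos (by positivity) (by linarith)
    have h2 : 4 * (L / (4 * π)) * π = L := by field_simp
    linarith
  set l := (A / π) ^ ((1:ℝ) / 3) with hl
  have hl0 : 0 < l := by positivity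
  have hl3 : l ^ 3 = A / π := by
    rw [hl, ← rpow_natCast, ← rpow_mul (by positivity)]; norm_num
  have hAl : A = π * l ^ 3 := by rw [hl3]; field_simp
  have hsum : (l ^ 2)⁻¹ * (2 * A) + 4 * l * π = 3 * (2 * π * l) := by
    rw [hAl]; field_simp; ring
  obtain ⟨k1, k2⟩ := key l hl0
  rw [hsum] at k1 k2
  have e8 : 8 * π ^ 2 * A = (2 * π * l) ^ 3 := by rw [hAl]; ring
  rw [e8]
  refine ⟨pow_le_pow_left₀ hLpos.le (by linarith) 3, fun he => ?_⟩
  have : L = 2 * π * l := (pow_left_inj₀ hLpos.le (by positivity) (by norm_num)).1 he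
  obtain ⟨g1, g2⟩ := k2 (by rw [this])
  refine ellipse_image hpos hX pX pY rfl rfl ?_ g1 g2
  have hne : X (-(π / 2)) < X (π / 2) := arc_strictMono hX hpos
    (Set.left_mem_Icc.2 (by linarith)) (Set.right_mem_Icc.2 (by linarith)) (by linarith)
  have : 0 < X (π / 2) - X (-(π / 2)) := by linarith
  positivity

lemma ellipse_conv {ℓ : ℝ} (hℓ : 0 < ℓ) {u v u' v' u'' v'' κ : ℝ → ℝ} {D A L : ℝ}
    (hu : ∀ s, HasDerivAt u (u' s) s) (hv : ∀ s, HasDerivAt v (v' s) s)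
    (hu' : ∀ s, HasDerivAt u' (u'' s) s) (hv' : ∀ s, HasDerivAt v' (v'' s) s)
    (h1 : ∀ s, u s ^ 2 + v s ^ 2 = 1) (hκ : ∀ s, κ s = D * (u' s * v'' s - v' s * u'' s))
    (hκpos : ∀ s, 0 < κ s) (pu : u ℓ = u 0) (pv : v ℓ = v 0)
    (hL : L = ∫ s in (0:ℝ)..ℓ, κ s ^ ((1:ℝ) / 3))
    (hA : A = 1 / 2 * (D * ∫ s in (0:ℝ)..ℓ, (u s * v' s - v s * u' s)))
    (hle : L ^ 3 ≤ 8 * π ^ 2 * A) : L ^ 3 = 8 * π ^ 2 * A := by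
  have hpi := pi_pos
  have hd1 : ∀ s, u s * u' s + v s * v' s = 0 := by
    intro s
    have a1 : HasDerivAt (fun s => u s ^ 2 + v s ^ 2) (2 * u s * u' s + 2 * v s * v' s) s := by
      refine (((hu s).pow 2).add ((hv s).pow 2)).congr_deriv ?_
      norm_num
    have a2 : HasDerivAt (fun s => u s ^ 2 + v s ^ 2) 0 s := by
      have : (fun s => u s ^ 2 + v s ^ 2) = fun _ => (1:ℝ) := funext h1
      rw [this]; exact hasDerivAt_const _ _
    have := a1.unique a2
    linarith
  have hd2 : ∀ s, u s * u'' s + v s * v'' s = - (u' s ^ 2 + v' s ^ 2) := by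
    intro s
    have a1 := ((hu s).mul (hu' s)).add ((hv s).mul (hv' s))
    have a2 : HasDerivAt (u * u' + v * v') 0 s := by
      have : (u * u' + v * v') = fun _ => (0:ℝ) := funext hd1
      rw [this]; exact hasDerivAt_const _ _
    have := a1.unique a2
    linarith
  set τ : ℝ → ℝ := fun s => u s * v' s - v s * u' s with hτ
  have eu : ∀ s, u' s = -(τ s * v s) := by
    intro s
    simp only [hτ]
    linear_combination (-u' s) * h1 s + u s * hd1 s
  have ev : ∀ s, v' s = τ s * u s := by
    intro s
    simp only [hτ]
    linear_combination (-v' s) * h1 s + v s * hd1 s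
  have hκ3 : ∀ s, κ s = D * τ s ^ 3 := by
    intro s
    have w1 : u' s ^ 2 + v' s ^ 2 = τ s ^ 2 := by
      rw [eu s, ev s]; linear_combination (τ s ^ 2) * h1 s
    rw [hκ]
    have : u' s * v'' s - v' s * u'' s = - τ s * (u s * u'' s + v s * v'' s) := by
      rw [eu s, ev s]; ring
    rw [this, hd2, w1]; ring
  have cu : Continuous u := continuous_iff_continuousAt.2 fun t => (hu t).continuousAt
  have cv : Continuous v := continuous_iff_continuousAt.2 fun t => (hv t).continuousAt
  have cu' : Continuous u' := continuous_iff_continuousAt.2 fun t => (hu' t).continuousAt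
  have cv' : Continuous v' := continuous_iff_continuousAt.2 fun t => (hv' t).continuousAt
  have cτ : Continuous τ := by fun_prop
  obtain ⟨θ, hθ, hc, hs⟩ := lift_angle cτ (fun s => (eu s) ▸ hu s) (fun s => (ev s) ▸ hv s) h1
  have hW : ∫ s in (0:ℝ)..ℓ, τ s = θ ℓ - θ 0 :=
    intervalIntegral.integral_eq_sub_of_hasDerivAt (fun s _ => hθ s) (cτ.intervalIntegrable _ _)
  have hcos : cos (θ ℓ - θ 0) = 1 := by
    rw [cos_sub, ← hc, ← hc, ← hs, ← hs, pu, pv]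
    linear_combination h1 0
  obtain ⟨n, hn⟩ := (cos_eq_one_iff _).1 hcos
  rw [← hW] at hn
  obtain ⟨ε, hε, hεD⟩ : ∃ ε : ℝ, ε ^ 2 = 1 ∧ 0 < ε * D := by
    have hD : D ≠ 0 := by
      intro h; have := hκpos 0; rw [hκ3, h, zero_mul] at this; exact lt_irrefl _ this
    rcases lt_or_gt_of_ne hD with h | h
    · exact ⟨-1, by norm_num, by linarith⟩
    · exact ⟨1, by norm_num, by linarith⟩
  have hετ : ∀ s, 0 < ε * τ s := by
    intro s
    have h := hκpos s
    have e : κ s = (ε * D) * (ε * τ s) ^ 3 := by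
      rw [hκ3]; linear_combination (-(ε ^ 2 + 1) * D * τ s ^ 3) * hε
    rw [e] at h
    have h3 := pos_of_mul_pos_right h hεD.le
    exact (Odd.pow_pos_iff (by decide : Odd 3)).1 h3
  have hrpow : ∀ s, κ s ^ ((1:ℝ) / 3) = (ε * D) ^ ((1:ℝ) / 3) * (ε * τ s) := by
    intro s
    have e : κ s = (ε * D) * (ε * τ s) ^ 3 := by
      rw [hκ3]; linear_combination (-(ε ^ 2 + 1) * D * τ s ^ 3) * hε
    rw [e, mul_rpow hεD.le (pow_nonneg (hετ s).le 3), ← rpow_natCast (ε * τ s) 3,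
      ← rpow_mul (hετ s).le]
    norm_num
  set W := ∫ s in (0:ℝ)..ℓ, τ s with hWdef
  have hLW : L = (ε * D) ^ ((1:ℝ) / 3) * (ε * W) := by
    rw [hL, intervalIntegral.integral_congr (fun s _ => hrpow s),
      intervalIntegral.integral_const_mul, intervalIntegral.integral_const_mul]
  have hεW : 0 < ε * W := by
    rw [hWdef, ← intervalIntegral.integral_const_mul]
    exact intervalIntegral.intervalIntegral_pos_of_pos
      ((cτ.const_smul ε).intervalIntegrable _ _) hετ hℓ
  have hL3 : L ^ 3 = (ε * D) * (ε * W) ^ 3 := by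
    rw [hLW, mul_pow, ← rpow_natCast ((ε * D) ^ ((1:ℝ) / 3)), ← rpow_mul hεD.le]
    norm_num
  have hA' : A = 1 / 2 * ((ε * D) * (ε * W)) := by
    rw [hA]; linear_combination (-(1 / 2) * D * W) * hε
  have hWsq : W ^ 2 = (ε * W) ^ 2 := by linear_combination (- W ^ 2) * hε
  have hle2 : (ε * W) ^ 2 ≤ 4 * π ^ 2 := by
    rw [hL3, hA'] at hle
    have : ((ε * D) * (ε * W)) * (ε * W) ^ 2 ≤ ((ε * D) * (ε * W)) * (4 * π ^ 2) := by linarith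
    exact le_of_mul_le_mul_left this (mul_pos hεD hεW)
  have hn1 : n ^ 2 = 1 := by
    have a1 : (n:ℝ) ^ 2 ≤ 1 := by
      rw [← hWsq, ← hn] at hle2
      have : (4 * π ^ 2) * (n:ℝ) ^ 2 ≤ (4 * π ^ 2) * 1 := by linarith
      exact le_of_mul_le_mul_left this (by positivity)
    have a2 : n ≠ 0 := by
      intro h
      rw [h] at hn; simp at hn
      rw [← hn] at hεW; simp at hεW
    have a3 : n ^ 2 ≤ 1 := by exact_mod_cast a1
    have a4 : 0 < n ^ 2 := by positivity
    omega
  have hn1' : (n:ℝ) ^ 2 = 1 := by exact_mod_cast hn1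
  have hfin : (ε * W) ^ 2 = 4 * π ^ 2 := by
    rw [← hWsq, ← hn]; linear_combination (4 * π ^ 2) * hn1'
  rw [hL3, hA']
  linear_combination (ε * D) * (ε * W) * hfin

lemma det2_lin (T : (ℝ × ℝ) →ₗ[ℝ] (ℝ × ℝ)) (u v : ℝ × ℝ) :
    det2 (T u) (T v) = det2 (T (1, 0)) (T (0, 1)) * det2 u v := by
  have h : ∀ w : ℝ × ℝ, T w = w.1 • T (1, 0) + w.2 • T (0, 1) := by
    intro w
    rw [← map_smul, ← map_smul, ← map_add]
    congr 1
    ext <;> simp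
  rw [h u, h v]
  simp only [det2, Prod.fst_add, Prod.snd_add, Prod.smul_fst, Prod.smul_snd, smul_eq_mul]
  ring

/-- **affine isoperimetric inequality.** For a smooth closed strictly convex
curve `γ` of length `ℓ`, parameterized by arc length, injective on `[0,ℓ)`, with curvature
`κ = det(γ',γ'') > 0` and enclosed area `A = ½∫₀^ℓ det(γ,γ')`, one has
`(∫₀^ℓ κ^{1/3})³ ≤ 8π²A`, with equality iff the image of `γ` is an ellipse. -/
theorem stmt_7 (ℓ : ℝ) (hℓ : 0 < ℓ) (γ : ℝ → ℝ × ℝ) (hγ : ContDiff ℝ (⊤ : ℕ∞) γ)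
    (hper : ∀ s, γ (s + ℓ) = γ s)
    (harc : ∀ s, (deriv γ s).1 ^ 2 + (deriv γ s).2 ^ 2 = 1)
    (hinj : Set.InjOn γ (Set.Ico 0 ℓ))
    (κ : ℝ → ℝ) (hκdef : ∀ s, κ s = det2 (deriv γ s) (deriv (deriv γ) s))
    (hκpos : ∀ s, 0 < κ s)
    (A : ℝ) (hA : A = (1 / 2) * ∫ s in (0:ℝ)..ℓ, det2 (γ s) (deriv γ s)) :
    (∫ s in (0:ℝ)..ℓ, κ s ^ ((1:ℝ) / 3)) ^ 3 ≤ 8 * π ^ 2 * A ∧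
    ((∫ s in (0:ℝ)..ℓ, κ s ^ ((1:ℝ) / 3)) ^ 3 = 8 * π ^ 2 * A ↔
      ∃ (T : (ℝ × ℝ) ≃ₗ[ℝ] (ℝ × ℝ)) (b : ℝ × ℝ),
        Set.range γ = (fun q => T q + b) '' {q : ℝ × ℝ | q.1 ^ 2 + q.2 ^ 2 = 1}) := by
  have hpi := pi_pos
  -- derivatives
  have dγ : ∀ s, HasDerivAt γ (deriv γ s) s := fun s =>
    (hγ.differentiable (by simp) s).hasDerivAt
  have hγ1 : ContDiff ℝ (⊤ : ℕ∞) (deriv γ) := (contDiff_infty_iff_deriv.1 hγ).2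
  have ddγ : ∀ s, HasDerivAt (deriv γ) (deriv (deriv γ) s) s := fun s =>
    (hγ1.differentiable (by simp) s).hasDerivAt
  have hγ2 : ContDiff ℝ (⊤ : ℕ∞) (deriv (deriv γ)) := (contDiff_infty_iff_deriv.1 hγ1).2
  have c0 := hγ.continuous
  have c1 := hγ1.continuous
  have c2 := hγ2.continuous
  have perγ : Function.Periodic γ ℓ := hper
  have per1 : Function.Periodic (deriv γ) ℓ := by
    intro s
    rw [← deriv_comp_add_const]
    congr 1
    funext s; exact hper s
  have per2 : Function.Periodic (deriv (deriv γ)) ℓ := by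
    intro s
    rw [← deriv_comp_add_const]
    congr 1
    funext s; exact per1 s
  have cκ : Continuous κ := by
    have : κ = fun s => det2 (deriv γ s) (deriv (deriv γ) s) := funext hκdef
    rw [this]; unfold det2; fun_prop
  have perκ : Function.Periodic κ ℓ := by
    intro s; rw [hκdef, hκdef, per1, per2]
  set x : ℝ → ℝ := fun s => (γ s).1 with hx
  set y : ℝ → ℝ := fun s => (γ s).2 with hy
  set p : ℝ → ℝ := fun s => (deriv γ s).1 with hp
  set q : ℝ → ℝ := fun s => (deriv γ s).2 with hq
  have fstd : ∀ {f : ℝ → ℝ × ℝ} {f' : ℝ × ℝ} {s : ℝ}, HasDerivAt f f' s →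
      HasDerivAt (fun s => (f s).1) f'.1 s := fun h =>
    (ContinuousLinearMap.fst ℝ ℝ ℝ).hasFDerivAt.comp_hasDerivAt _ h
  have sndd : ∀ {f : ℝ → ℝ × ℝ} {f' : ℝ × ℝ} {s : ℝ}, HasDerivAt f f' s →
      HasDerivAt (fun s => (f s).2) f'.2 s := fun h =>
    (ContinuousLinearMap.snd ℝ ℝ ℝ).hasFDerivAt.comp_hasDerivAt _ h
  have dx : ∀ s, HasDerivAt x (p s) s := fun s => fstd (dγ s)
  have dy : ∀ s, HasDerivAt y (q s) s := fun s => sndd (dγ s)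
  have dp : ∀ s, HasDerivAt p (deriv (deriv γ) s).1 s := fun s => fstd (ddγ s)
  have dq : ∀ s, HasDerivAt q (deriv (deriv γ) s).2 s := fun s => sndd (ddγ s)
  have horth : ∀ s, p s * (deriv (deriv γ) s).1 + q s * (deriv (deriv γ) s).2 = 0 := by
    intro s
    have a1 := ((dp s).mul (dp s)).add ((dq s).mul (dq s))
    have a2 : HasDerivAt (p * p + q * q) 0 s := by
      have : (p * p + q * q) = fun _ => (1:ℝ) := by
        funext s
        have := harc s
        simp only [Pi.add_apply, Pi.mul_apply, hp, hq]
        linarith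
      rw [this]; exact hasDerivAt_const _ _
    have := a1.unique a2
    linarith
  have dp' : ∀ s, HasDerivAt p (-(κ s * q s)) s := by
    intro s
    refine (dp s).congr_deriv ?_
    rw [hκdef]; simp only [det2]
    have h1 := harc s
    have h2 := horth s
    simp only [hp, hq] at h2 ⊢
    linear_combination (-(deriv (deriv γ) s).1) * h1 + (deriv γ s).1 * h2
  have dq' : ∀ s, HasDerivAt q (κ s * p s) s := by
    intro s
    refine (dq s).congr_deriv ?_
    rw [hκdef]; simp only [det2]
    have h1 := harc s
    have h2 := horth s
    simp only [hp, hq] at h2 ⊢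
    linear_combination (-(deriv (deriv γ) s).2) * h1 + (deriv γ s).2 * h2
  obtain ⟨θ, dθ, hc, hs⟩ := lift_angle cκ dp' dq' harc
  have cθ : Continuous θ := continuous_iff_continuousAt.2 fun t => (dθ t).continuousAt
  have mθ : StrictMono θ := strictMono_of_deriv_pos fun s => by rw [(dθ s).deriv]; exact hκpos s
  -- period of θ
  obtain ⟨k, hk1, hk⟩ : ∃ k : ℕ, 1 ≤ k ∧ ∀ s, θ (s + ℓ) = θ s + k * (2 * π) := by
    have hcst : ∀ s, HasDerivAt (fun s => θ (s + ℓ) - θ s) 0 s := by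
      intro s
      refine (((dθ (s + ℓ)).comp_add_const s ℓ).sub (dθ s)).congr_deriv ?_
      rw [perκ]; ring
    have hcst' : ∀ s, θ (s + ℓ) - θ s = θ (0 + ℓ) - θ 0 := fun s =>
      is_const_of_deriv_eq_zero (fun s => (hcst s).differentiableAt)
        (fun s => (hcst s).deriv) s 0
    have hcos : cos (θ (0 + ℓ) - θ 0) = 1 := by
      rw [cos_sub, ← hc, ← hc, ← hs, ← hs]
      simp only [hp, hq]
      rw [per1]
      linear_combination harc 0
    obtain ⟨n, hn⟩ := (cos_eq_one_iff _).1 hcos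
    have hpos : 0 < θ (0 + ℓ) - θ 0 := sub_pos.2 (mθ (by linarith))
    have hn0 : 0 < n := by
      rw [← hn] at hpos
      have := pos_of_mul_pos_left hpos (by positivity)
      exact_mod_cast this
    obtain ⟨k, rfl⟩ := Int.eq_ofNat_of_zero_le hn0.le
    refine ⟨k, by exact_mod_cast hn0, fun s => ?_⟩
    have := hcst' s
    rw [← hn] at this
    push_cast at this
    linarith
  have hk1' : (1:ℝ) ≤ k := by exact_mod_cast hk1
  have hkZ : ∀ (m : ℤ) s, θ (s + m * ℓ) = θ s + m * (k * (2 * π)) := by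
    intro m s
    have hP : Function.Periodic (fun s => θ s - s / ℓ * (k * (2 * π))) ℓ := by
      intro s
      simp only
      rw [hk]; field_simp; ring
    have := hP.int_mul m s
    have e : (s + m * ℓ) / ℓ = s / ℓ + m := by field_simp
    rw [e] at this
    linarith
  -- inverse of θ
  have sθ : Function.Surjective θ := by
    intro t
    apply mem_range_of_exists_le_of_exists_ge cθ
    · obtain ⟨n, hn⟩ := exists_nat_gt (θ 0 - t)
      refine ⟨0 + ((-(n:ℤ) : ℤ) : ℝ) * ℓ, ?_⟩
      rw [hkZ]; push_cast
      have : (n:ℝ) * 1 ≤ n * (k * (2 * π)) :=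
        mul_le_mul_of_nonneg_left (by nlinarith [pi_gt_three]) (Nat.cast_nonneg n)
      linarith
    · obtain ⟨n, hn⟩ := exists_nat_gt (t - θ 0)
      refine ⟨0 + ((n:ℤ) : ℝ) * ℓ, ?_⟩
      rw [hkZ]; push_cast
      have : (n:ℝ) * 1 ≤ n * (k * (2 * π)) :=
        mul_le_mul_of_nonneg_left (by nlinarith [pi_gt_three]) (Nat.cast_nonneg n)
      linarith
  obtain ⟨σ, cσ, hσ⟩ : ∃ σ : ℝ → ℝ, Continuous σ ∧ ∀ t, θ (σ t) = t := by
    let e := mθ.orderIsoOfSurjective θ sθ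
    exact ⟨e.symm, e.symm.continuous, fun t => e.apply_symm_apply t⟩
  have hσ' : ∀ s, σ (θ s) = s := fun s => mθ.injective (hσ _)
  have dσ : ∀ t, HasDerivAt σ ((κ (σ t))⁻¹) t := fun t =>
    HasDerivAt.of_local_left_inverse cσ.continuousAt (dθ (σ t)) (hκpos _).ne'
      (Filter.Eventually.of_forall hσ)
  have σper : ∀ t, σ (t + k * (2 * π)) = σ t + ℓ := by
    intro t
    apply mθ.injective
    rw [hσ, hk, hσ]
  set ρ : ℝ → ℝ := fun t => (κ (σ t))⁻¹ with hρdef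
  have cρ : Continuous ρ := (cκ.comp cσ).inv₀ fun t => (hκpos _).ne'
  have ρpos : ∀ t, 0 < ρ t := fun t => inv_pos.2 (hκpos _)
  set X : ℝ → ℝ := fun t => x (σ t) with hXdef
  set Y : ℝ → ℝ := fun t => y (σ t) with hYdef
  have dX : ∀ t, HasDerivAt X (ρ t * cos t) t := by
    intro t
    refine ((dx (σ t)).comp t (dσ t)).congr_deriv ?_
    rw [hc, hσ]; ring
  have dY : ∀ t, HasDerivAt Y (ρ t * sin t) t := by
    intro t
    refine ((dy (σ t)).comp t (dσ t)).congr_deriv ?_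
    rw [hs, hσ]; ring
  have hinjZ : ∀ s t, γ s = γ t → ∃ m : ℤ, s - t = m * ℓ := by
    intro s t hst
    have e : ∀ s, γ (toIcoMod hℓ 0 s) = γ s := by
      intro s
      rw [toIcoMod]; exact perγ.sub_zsmul_eq _
    have hmem : ∀ s, toIcoMod hℓ 0 s ∈ Set.Ico 0 ℓ := by
      intro s; have := toIcoMod_mem_Ico hℓ 0 s; rwa [zero_add] at this
    have h := hinj (hmem s) (hmem t) (by rw [e, e, hst])
    refine ⟨toIcoDiv hℓ 0 s - toIcoDiv hℓ 0 t, ?_⟩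
    rw [toIcoMod, toIcoMod] at h
    simp only [zsmul_eq_mul] at h
    push_cast
    linarith
  have hkone : k = 1 := by
    apply turning_one ρpos dX dY hk1
    · intro t; simp only [hXdef, hx]; rw [σper, hper]
    · intro s t h1 h2
      obtain ⟨m, hm⟩ := hinjZ (σ s) (σ t) (Prod.ext h1 h2)
      refine ⟨m, ?_⟩
      have := hkZ m (σ t)
      rw [← hm] at this
      rw [hσ, add_sub_cancel, hσ] at this
      linarith
  have σp : ∀ t, σ (t + 2 * π) = σ t + ℓ := by
    intro t; have := σper t; rw [hkone] at this; simpa using this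
  have e32 : 3 * π / 2 = -(π / 2) + 2 * π := by ring
  have hsub : ∀ g : ℝ → ℝ, Continuous g → Function.Periodic g ℓ →
      ∫ s in (0:ℝ)..ℓ, g s = ∫ t in (-(π / 2))..(3 * π / 2), g (σ t) * ρ t := by
    intro g cg pg
    have h1 := intervalIntegral.integral_comp_mul_deriv (a := -(π / 2)) (b := 3 * π / 2)
      (f := σ) (f' := ρ) (g := g) (fun t _ => dσ t) cρ.continuousOn cg
    have h2 := pg.intervalIntegral_add_eq 0 (σ (-(π / 2)))
    rw [zero_add] at h2
    rw [h2, ← σp, ← e32, ← h1]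
    rfl
  set L := ∫ s in (0:ℝ)..ℓ, κ s ^ ((1:ℝ) / 3) with hLdef
  have hL : L = ∫ t in (-(π / 2))..(3 * π / 2), ρ t ^ ((2:ℝ) / 3) := by
    rw [hLdef, hsub _ (cκ.rpow_const fun t => Or.inr (by norm_num)) (by
      intro s; simp only; rw [perκ])]
    congr 1
    funext t
    have hr := ρpos t
    have : κ (σ t) = (ρ t)⁻¹ := by simp [hρdef]
    rw [this, inv_rpow hr.le, ← rpow_neg hr.le]
    nth_rewrite 2 [← rpow_one (ρ t)]
    rw [← rpow_add hr]
    norm_num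
  have hA2 : A = 1 / 2 * ∫ t in (-(π / 2))..(3 * π / 2),
      (X t * (ρ t * sin t) - Y t * (ρ t * cos t)) := by
    rw [hA, hsub (fun s => det2 (γ s) (deriv γ s)) (by unfold det2; fun_prop) (by
      intro s; simp only; rw [perγ, per1])]
    congr 2
    funext t
    have g1 := hc (σ t)
    have g2 := hs (σ t)
    rw [hσ] at g1 g2
    rw [← g1, ← g2]
    simp only [det2, hXdef, hYdef, hx, hy, hp, hq]
    ring
  have pX : X (3 * π / 2) = X (-(π / 2)) := by
    rw [e32]; simp only [hXdef, hx]; rw [σp, hper]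
  have pY : Y (3 * π / 2) = Y (-(π / 2)) := by
    rw [e32]; simp only [hYdef, hy]; rw [σp, hper]
  obtain ⟨k1, k2⟩ := core_theta cρ ρpos dX dY pX pY hA2 hL
  refine ⟨k1, ?_, ?_⟩
  · intro he
    obtain ⟨T, d, h⟩ := k2 he
    refine ⟨T, d, ?_⟩
    rw [← h]
    have hP : Function.Periodic (fun t => (X t, Y t)) (2 * π) := by
      intro t
      simp only [hXdef, hYdef, hx, hy]
      rw [σp, hper]
    rw [e32, hP.image_Icc (by positivity)]
    ext z
    constructor
    · rintro ⟨s, rfl⟩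
      exact ⟨θ s, by simp only [hXdef, hYdef, hx, hy, hσ']⟩
    · rintro ⟨t, rfl⟩
      exact ⟨σ t, rfl⟩
  · rintro ⟨T, b, hT⟩
    let S : (ℝ × ℝ) →L[ℝ] (ℝ × ℝ) := LinearMap.toContinuousLinearMap (T.symm : (ℝ × ℝ) →ₗ[ℝ] (ℝ × ℝ))
    have hS : ∀ z, S z = T.symm z := fun z => rfl
    have hTS : ∀ z, T (S z) = z := fun z => T.apply_symm_apply z
    set w : ℝ → ℝ × ℝ := fun s => S (γ s - b) with hw
    have dw : ∀ s, HasDerivAt w (S (deriv γ s)) s := fun s =>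
      S.hasFDerivAt.comp_hasDerivAt s ((dγ s).sub_const b)
    have ddw : ∀ s, HasDerivAt (fun s => S (deriv γ s)) (S (deriv (deriv γ) s)) s := fun s =>
      S.hasFDerivAt.comp_hasDerivAt s (ddγ s)
    have hunit : ∀ s, (w s).1 ^ 2 + (w s).2 ^ 2 = 1 := by
      intro s
      have : γ s ∈ Set.range γ := ⟨s, rfl⟩
      rw [hT] at this
      obtain ⟨z, hz, hzs⟩ := this
      have : w s = z := by
        simp only [hw, ← hzs, hS, add_sub_cancel_right, LinearEquiv.symm_apply_apply]
      rw [this]; exact hz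
    have hdet : ∀ z z' : ℝ × ℝ, det2 z z' = det2 (T (1, 0)) (T (0, 1)) * det2 (S z) (S z') := by
      intro z z'
      have := det2_lin (T : (ℝ × ℝ) →ₗ[ℝ] (ℝ × ℝ)) (S z) (S z')
      simp only [LinearEquiv.coe_coe, hTS] at this
      exact this
    refine ellipse_conv hℓ (fun s => fstd (dw s)) (fun s => sndd (dw s)) (fun s => fstd (ddw s))
      (fun s => sndd (ddw s)) hunit (D := det2 (T (1, 0)) (T (0, 1))) ?_ hκpos ?_ ?_ hLdef ?_ k1
    · intro s
      rw [hκdef, hdet]; rfl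
    · have := hper 0
      rw [zero_add] at this
      simp only [hw, this]
    · have := hper 0
      rw [zero_add] at this
      simp only [hw, this]
    · rw [hA]
      congr 1
      rw [← intervalIntegral.integral_const_mul, ← sub_eq_zero, ← intervalIntegral.integral_sub]
      · have hd : ∀ s, HasDerivAt (fun s => det2 b (γ s)) (det2 b (deriv γ s)) s := by
          intro s
          exact ((dy s).const_mul b.1).sub ((dx s).const_mul b.2)
        have e : ∀ s, det2 (γ s) (deriv γ s) - det2 (T (1, 0)) (T (0, 1)) *
            ((w s).1 * (S (deriv γ s)).2 - (w s).2 * (S (deriv γ s)).1) = det2 b (deriv γ s) := by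
          intro s
          have : det2 (γ s - b) (deriv γ s) = det2 (T (1, 0)) (T (0, 1)) *
            ((w s).1 * (S (deriv γ s)).2 - (w s).2 * (S (deriv γ s)).1) := hdet _ _
          rw [← this]
          simp only [det2, Prod.fst_sub, Prod.snd_sub]
          ring
        rw [intervalIntegral.integral_congr (fun s _ => e s),
          intervalIntegral.integral_eq_sub_of_hasDerivAt (fun s _ => hd s)]
        · have := hper 0
          rw [zero_add] at this
          rw [this, sub_self]
        · exact Continuous.intervalIntegrable (by unfold det2; fun_prop) _ _
      · exact Continuous.intervalIntegrable (by unfold det2; fun_prop) _ _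
      · exact Continuous.intervalIntegrable (by fun_prop) _ _
end

section
/- Fix n ≥ 3. On the space (ℝ²)^{ℤ/nℤ} of planar n-gons z = (z₁,…,zₙ) (indices mod n), let A(z) = ½·∑ᵢ ω(zᵢ, zᵢ₊₁) be the algebraic area, where ω(u,v) = u₁v₂ − u₂v₁, and for each i let vᵢ(z) ∈ (ℝ²)^{ℤ/nℤ} be the vector whose i-th component is zᵢ₊₁ − zᵢ₋₁ and whose other components are 0. Then for every z and every i, the derivative of A at z in the direction vᵢ(z) vanishes: dA_z(vᵢ(z)) = 0. Moreover, if z satisfies zᵢ₊₁ ≠ zᵢ₋₁ for all i, then the vectors v₁(z),…,vₙ(z) are linearly independent. -/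
/-- The algebraic area `A(z) = ½ ∑ᵢ ω(zᵢ, zᵢ₊₁)` of a planar `n`-gon (indices mod `n`). -/
noncomputable def polyArea {n : ℕ} [NeZero n] (z : ZMod n → ℝ × ℝ) : ℝ :=
  (1 / 2) * ∑ i : ZMod n, symp2 (z i) (z (i + 1))

/-- The vector field `vᵢ`: its `i`-th component at `z` is `zᵢ₊₁ − zᵢ₋₁`, other components `0`. -/
noncomputable def vfield {n : ℕ} [NeZero n] (i : ZMod n) (z : ZMod n → ℝ × ℝ) :
    ZMod n → ℝ × ℝ :=
  Pi.single i (z (i + 1) - z (i - 1))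

lemma polyArea_add_smul {n : ℕ} [NeZero n] (z : ZMod n → ℝ × ℝ) (i : ZMod n) (t : ℝ) :
    polyArea (z + t • vfield i z) = polyArea z := by
  have h1 : ∀ j, symp2 (vfield i z j) (z (j + 1)) + symp2 (z (j - 1)) (vfield i z j) = 0 := by
    intro j
    by_cases h : j = i
    · subst h
      simp [vfield, symp2]; ring
    · simp [vfield, symp2, h]
  have h2 : ∀ j, symp2 (vfield i z j) (vfield i z (j + 1)) = 0 := by
    intro j
    by_cases h : j = i
    · by_cases h' : j + 1 = i
      · have : vfield i z (j + 1) = vfield i z j := by rw [h', h]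
        rw [this]; simp only [symp2]; ring
      · simp [vfield, symp2, h']
    · simp [vfield, symp2, h]
  have h3 : ∑ j, symp2 (z j) (vfield i z (j + 1)) = ∑ j, symp2 (z (j - 1)) (vfield i z j) := by
    rw [← Equiv.sum_comp (Equiv.addRight (1 : ZMod n)) (fun j => symp2 (z (j - 1)) (vfield i z j))]
    simp
  have h4 : ∑ j, symp2 (vfield i z j) (z (j + 1)) + ∑ j, symp2 (z j) (vfield i z (j + 1)) = 0 := by
    rw [h3, ← Finset.sum_add_distrib]
    exact Finset.sum_eq_zero fun j _ => h1 j
  have h5 : ∀ j, symp2 ((z + t • vfield i z) j) ((z + t • vfield i z) (j + 1)) =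
      symp2 (z j) (z (j + 1)) + t * (symp2 (vfield i z j) (z (j + 1)) +
        symp2 (z j) (vfield i z (j + 1))) := by
    intro j
    have := h2 j
    simp only [symp2, Pi.add_apply, Pi.smul_apply, Prod.fst_add, Prod.snd_add, Prod.smul_fst,
      Prod.smul_snd, smul_eq_mul] at this ⊢
    linear_combination t ^ 2 * this
  unfold polyArea
  rw [Finset.sum_congr rfl fun j _ => h5 j, Finset.sum_add_distrib, ← Finset.mul_sum,
    Finset.sum_add_distrib, h4]
  simp

lemma polyArea_differentiable {n : ℕ} [NeZero n] :
    Differentiable ℝ (polyArea : (ZMod n → ℝ × ℝ) → ℝ) := by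
  unfold polyArea symp2
  fun_prop

/-- For `n ≥ 3`: the derivative of the area `A` at any `n`-gon `z` in the
direction `vᵢ(z)` vanishes; and if `zᵢ₊₁ ≠ zᵢ₋₁` for all `i`, then `v₁(z),…,vₙ(z)` are
linearly independent. -/
theorem stmt_8 (n : ℕ) [NeZero n] (hn : 3 ≤ n) :
    (∀ (z : ZMod n → ℝ × ℝ) (i : ZMod n),
        fderiv ℝ polyArea z (vfield i z) = 0) ∧
    (∀ z : ZMod n → ℝ × ℝ, (∀ i, z (i + 1) ≠ z (i - 1)) →
        LinearIndependent ℝ fun i => vfield i z) := by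
  refine ⟨fun z i => ?_, fun z hz => ?_⟩
  · rw [← (polyArea_differentiable z).lineDeriv_eq_fderiv]
    simp [lineDeriv, polyArea_add_smul]
  · rw [Fintype.linearIndependent_iff]
    intro g hg i
    have h := congrFun hg i
    rw [Finset.sum_apply, Finset.sum_eq_single i] at h
    · simpa [vfield, sub_eq_zero, hz i] using h
    · intro j _ hj
      simp [vfield, Pi.single_eq_of_ne hj.symm]
    · simp
end

section
/- Fix n ≥ 3. On E = (ℝ²)^{ℤ/nℤ}, for each i let vᵢ be the vector field whose i-th component at z is zᵢ₊₁ − zᵢ₋₁ and whose other components are 0, and for smooth vector fields X, Y : E → E define the Lie bracket [X,Y](z) = DY(z)(X(z)) − DX(z)(Y(z)). Then: (a) [vᵢ, vⱼ] = 0 identically whenever j ∉ {i−1, i, i+1} mod n; (b) for every z and every i, the bracket [vᵢ₊₁, vᵢ](z) is the vector whose i-th component is zᵢ₊₂ − zᵢ, whose (i+1)-st component is zᵢ₊₁ − zᵢ₋₁, and whose other components are 0; in particular, det(vᵢ(z)ᵢ-component, [vᵢ₊₁,vᵢ](z)ᵢ-component) = det(zᵢ₊₁ − zᵢ₋₁,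 zᵢ₊₂ − zᵢ), where det(u,v) = u₁v₂ − u₂v₁. -/
/-- Lie bracket of vector fields on the vector space `(ℝ²)^{ℤ/nℤ}`:
`[X,Y](z) = DY(z)(X(z)) − DX(z)(Y(z))`. -/
noncomputable def bracket {n : ℕ} [NeZero n]
    (X Y : (ZMod n → ℝ × ℝ) → (ZMod n → ℝ × ℝ)) (z : ZMod n → ℝ × ℝ) :
    ZMod n → ℝ × ℝ :=
  fderiv ℝ Y z (X z) - fderiv ℝ X z (Y z)

theorem fderiv_vfield {n : ℕ} [NeZero n] (i : ZMod n) (z w : ZMod n → ℝ × ℝ) :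
    fderiv ℝ (vfield i) z w = vfield i w := by
  let L : (ZMod n → ℝ × ℝ) →L[ℝ] (ZMod n → ℝ × ℝ) :=
    (ContinuousLinearMap.single ℝ (fun _ : ZMod n => ℝ × ℝ) i).comp
      (ContinuousLinearMap.proj (R := ℝ) (φ := fun _ : ZMod n => ℝ × ℝ) (i + 1) - ContinuousLinearMap.proj (R := ℝ) (φ := fun _ : ZMod n => ℝ × ℝ) (i - 1))
  have h : (vfield i : (ZMod n → ℝ × ℝ) → (ZMod n → ℝ × ℝ)) = L := by
    funext z
    simp [vfield, L, Pi.single_sub]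
  rw [h, ContinuousLinearMap.fderiv]

/-- For `n ≥ 3`: (a) `[vᵢ,vⱼ] = 0` whenever `j ∉ {i−1, i, i+1}` mod `n`;
(b) `[vᵢ₊₁,vᵢ](z)` has `i`-th component `zᵢ₊₂ − zᵢ`, `(i+1)`-st component `zᵢ₊₁ − zᵢ₋₁`, and
all other components `0`; in particular
`det((vᵢ(z))ᵢ, ([vᵢ₊₁,vᵢ](z))ᵢ) = det(zᵢ₊₁ − zᵢ₋₁, zᵢ₊₂ − zᵢ)`. -/
theorem stmt_9 (n : ℕ) [NeZero n] (hn : 3 ≤ n) :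
    (∀ i j : ZMod n, j ≠ i - 1 → j ≠ i → j ≠ i + 1 →
        ∀ z : ZMod n → ℝ × ℝ, bracket (vfield i) (vfield j) z = 0) ∧
    (∀ (z : ZMod n → ℝ × ℝ) (i : ZMod n),
        bracket (vfield (i + 1)) (vfield i) z
          = Pi.single i (z (i + 2) - z i) + Pi.single (i + 1) (z (i + 1) - z (i - 1))) ∧
    (∀ (z : ZMod n → ℝ × ℝ) (i : ZMod n),
        det2 (vfield i z i) (bracket (vfield (i + 1)) (vfield i) z i)
          = det2 (z (i + 1) - z (i - 1)) (z (i + 2) - z i)) := by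
  have h1 : (1 : ZMod n) ≠ 0 := by
    intro h
    have h' : ((1 : ℕ) : ZMod n) = 0 := by exact_mod_cast h
    rw [ZMod.natCast_eq_zero_iff] at h'
    have := Nat.le_of_dvd (by norm_num) h'
    omega
  have h2 : (2 : ZMod n) ≠ 0 := by
    intro h
    have h' : ((2 : ℕ) : ZMod n) = 0 := by exact_mod_cast h
    rw [ZMod.natCast_eq_zero_iff] at h'
    have := Nat.le_of_dvd (by norm_num) h'
    omega
  have hb : ∀ (z : ZMod n → ℝ × ℝ) (i : ZMod n),
        bracket (vfield (i + 1)) (vfield i) z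
          = Pi.single i (z (i + 2) - z i) + Pi.single (i + 1) (z (i + 1) - z (i - 1)) := by
    intro z i
    have e1 : i - 1 ≠ i + 1 := fun h => h2 (by linear_combination -h)
    have e2 : i + 1 + 1 ≠ i := fun h => h2 (by linear_combination h)
    have e3 : i + 1 + 1 = i + 2 := by ring
    unfold bracket
    rw [fderiv_vfield, fderiv_vfield]
    simp only [vfield, Pi.single_eq_same, Pi.single_eq_of_ne e1, Pi.single_eq_of_ne e2,
      add_sub_cancel_right, sub_zero, zero_sub, Pi.single_neg, sub_neg_eq_add]
    rw [e3]
  refine ⟨?_, hb, ?_⟩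
  · intro i j ha hb hc z
    have e1 : j + 1 ≠ i := fun h => ha (by linear_combination h)
    have e2 : j - 1 ≠ i := fun h => hc (by linear_combination h)
    have e3 : i + 1 ≠ j := fun h => hc h.symm
    have e4 : i - 1 ≠ j := fun h => ha h.symm
    unfold bracket
    rw [fderiv_vfield, fderiv_vfield]
    simp [vfield, Pi.single_eq_of_ne e1, Pi.single_eq_of_ne e2, Pi.single_eq_of_ne e3,
      Pi.single_eq_of_ne e4]
  · intro z i
    have e : i ≠ i + 1 := fun h => h1 (by linear_combination -h)
    rw [hb]
    simp [vfield, Pi.single_eq_of_ne e]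
end

section
/- Let n ≥ 1, identify ℝ^{2n} with ℂⁿ, and let f : ℝ^{2n} → ℝ be a smooth (C^∞) function whose second derivative (Hessian) is positive definite at every point. Assume M := f⁻¹({1}) is nonempty and compact, and that there exists a point x₀ with f(x₀) < 1. Then for every integer k ≥ 3 there exist points z₁, …, z_k ∈ M (indices taken mod k) and nonzero real numbers t₁, …, t_k such that z_{i+1} − z_{i−1} = tᵢ·(i·∇f(zᵢ)) for every i, where ∇f denotes the gradient of f and i·∇f(zᵢ) is the complex multiplication of the gradient by i. -/
theorem aux_convex {n : ℕ} (f : EuclideanSpace ℂ (Fin n) → ℝ) (hf : ContDiff ℝ (⊤ : ℕ∞) f)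
    (hhess : ∀ (x v : EuclideanSpace ℂ (Fin n)), v ≠ 0 →
        0 < iteratedFDeriv ℝ 2 f x ![v, v]) (y u : EuclideanSpace ℂ (Fin n)) (hu : u ≠ 0) :
    (∀ s : ℝ, HasDerivAt (fun s : ℝ => f (y + s • u)) (fderiv ℝ f (y + s • u) u) s) ∧
    StrictConvexOn ℝ Set.univ (fun s : ℝ => f (y + s • u)) := by
  have hl : ∀ s : ℝ, HasDerivAt (fun s : ℝ => y + s • u) u s := by
    intro s
    simpa using ((hasDerivAt_id s).smul_const u).const_add y
  have h1 : ∀ s : ℝ, HasDerivAt (fun s : ℝ => f (y + s • u)) (fderiv ℝ f (y + s • u) u) s := by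
    intro s
    have hd : DifferentiableAt ℝ f (y + s • u) := (hf.differentiable (by simp)) _
    exact hd.hasFDerivAt.comp_hasDerivAt s (hl s)
  refine ⟨h1, ?_⟩
  have h2 : ∀ s : ℝ, HasDerivAt (fun s : ℝ => fderiv ℝ f (y + s • u) u)
      (fderiv ℝ (fderiv ℝ f) (y + s • u) u u) s := by
    intro s
    have hc : ContDiff ℝ 1 (fderiv ℝ f) := hf.fderiv_right (WithTop.coe_le_coe.2 (le_top : ((1 + 1 : ℕ∞)) ≤ ⊤))
    have hd : DifferentiableAt ℝ (fderiv ℝ f) (y + s • u) := (hc.differentiable (by simp)) _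
    have := hd.hasFDerivAt.comp_hasDerivAt s (hl s)
    simpa using this.clm_apply (hasDerivAt_const s u)
  apply strictConvexOn_univ_of_deriv2_pos
  · exact continuous_iff_continuousAt.2 fun s => (h1 s).continuousAt
  · intro s
    have e : deriv (fun s : ℝ => f (y + s • u)) = fun s => fderiv ℝ f (y + s • u) u :=
      funext fun s => (h1 s).deriv
    simp only [Function.iterate_succ, Function.iterate_zero, Function.comp, id]
    rw [e, (h2 s).deriv]
    have := hhess (y + s • u) u hu
    rw [iteratedFDeriv_two_apply] at this
    simpa using this

theorem aux_line (φ : ℝ → ℝ) (hc : StrictConvexOn ℝ Set.univ φ) (hcont : Continuous φ)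
    (h0 : φ 0 < 1) : ∃ s, φ s = 1 := by
  by_contra! hne
  have hlt : ∀ s, φ s < 1 := by
    intro s
    by_contra! hs
    obtain ⟨r, hr⟩ := mem_range_of_exists_le_of_exists_ge hcont ⟨0, h0.le⟩ ⟨s, hs⟩
    exact hne r hr
  have hmid := hc.2 (Set.mem_univ (1:ℝ)) (Set.mem_univ (-1:ℝ)) (by norm_num)
    (show (0:ℝ) < 1/2 by norm_num) (show (0:ℝ) < 1/2 by norm_num) (by norm_num)
  have e0 : ((1:ℝ)/2) • (1:ℝ) + ((1:ℝ)/2) • (-1:ℝ) = 0 := by norm_num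
  rw [e0] at hmid
  simp only [smul_eq_mul] at hmid
  have key : ∀ a : ℝ, φ 0 < φ a → False := by
    intro a ha
    set N : ℝ := max 1 ((1 - φ 0) / (φ a - φ 0)) with hN
    have hN1 : 1 ≤ N := le_max_left _ _
    have hN2 : (1 - φ 0) / (φ a - φ 0) ≤ N := le_max_right _ _
    rw [div_le_iff₀ (by linarith)] at hN2
    have hNpos : 0 < N := by linarith
    have := hc.convexOn.2 (Set.mem_univ (N * a)) (Set.mem_univ (0:ℝ))
      (show (0:ℝ) ≤ 1 / N by positivity) (show (0:ℝ) ≤ 1 - 1 / N by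
        rw [sub_nonneg, div_le_one hNpos]; exact hN1) (by ring)
    have e1 : (1 / N) • (N * a) + (1 - 1 / N) • (0:ℝ) = a := by
      simp only [smul_eq_mul]; field_simp; ring
    rw [e1] at this
    simp only [smul_eq_mul] at this
    have h3 := hlt (N * a)
    have h4 : N * φ a ≤ φ (N * a) + (N - 1) * φ 0 := by
      have := mul_le_mul_of_nonneg_left this hNpos.le
      have e2 : N * (1 / N * φ (N * a) + (1 - 1 / N) * φ 0) = φ (N * a) + (N - 1) * φ 0 := by
        field_simp
      linarith
    nlinarith
  by_cases h : φ 0 < φ 1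
  · exact key _ h
  · exact key (-1) (by linarith)

/-- The linear functional `x ↦ ω(x, w)`. -/
noncomputable def auxL {n : ℕ} (w : EuclideanSpace ℂ (Fin n)) : EuclideanSpace ℂ (Fin n) →L[ℝ] ℝ :=
  -(Complex.imCLM.comp ((innerSL ℂ w).restrictScalars ℝ))

theorem auxL_apply {n : ℕ} (w x : EuclideanSpace ℂ (Fin n)) :
    auxL w x = -(inner ℂ w x : ℂ).im := by
  simp [auxL]

theorem auxL_swap {n : ℕ} (w x : EuclideanSpace ℂ (Fin n)) :
    auxL w x = - auxL x w := by
  rw [auxL_apply, auxL_apply, ← inner_conj_symm w x, Complex.conj_im]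

theorem auxL_nondeg {n : ℕ} (w g : EuclideanSpace ℂ (Fin n)) (c : ℝ)
    (h : ∀ x, auxL w x = c * rinner g x) : w = c • (Complex.I • g) := by
  have h1 : ∀ x, (inner ℂ (w - c • (Complex.I • g)) x : ℂ).im = 0 := by
    intro x
    have := h x
    rw [auxL_apply] at this
    unfold rinner at this
    rw [inner_sub_left, ← Complex.coe_smul, inner_smul_left, inner_smul_left]
    simp
    linarith
  have h2 := h1 (Complex.I • (w - c • (Complex.I • g)))
  rw [inner_smul_right] at h2
  simp only [Complex.mul_im, Complex.I_re, Complex.I_im, zero_mul, one_mul, zero_add] at h2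
  have h3 : (inner ℂ (w - c • (Complex.I • g)) (w - c • (Complex.I • g)) : ℂ) = 0 := by
    apply Complex.ext
    · simpa using h2
    · exact h1 _
  exact sub_eq_zero.1 (inner_self_eq_zero.1 h3)

/-- The symplectic area. -/
noncomputable def auxF {n k : ℕ} [NeZero k] (z : ZMod k → EuclideanSpace ℂ (Fin n)) : ℝ :=
  ∑ i, auxL (z (i + 1)) (z i)

theorem auxF_cont {n k : ℕ} [NeZero k] :
    Continuous (auxF : (ZMod k → EuclideanSpace ℂ (Fin n)) → ℝ) := by
  unfold auxF
  simp only [auxL_apply]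
  fun_prop

theorem auxL_sub {n : ℕ} (w w' x : EuclideanSpace ℂ (Fin n)) :
    auxL (w - w') x = auxL w x - auxL w' x := by
  simp only [auxL_apply, inner_sub_left, Complex.sub_im]; ring

theorem auxF_update {n k : ℕ} [NeZero k] (h1 : (1 : ZMod k) ≠ 0)
    (z : ZMod k → EuclideanSpace ℂ (Fin n)) (i : ZMod k) (x : EuclideanSpace ℂ (Fin n)) :
    auxF (Function.update z i x) = auxF z + auxL (z (i + 1) - z (i - 1)) (x - z i) := by
  have hi1 : i - 1 ≠ i := by simpa using h1
  have hi2 : i + 1 ≠ i := by simpa using h1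
  have : auxF (Function.update z i x) - auxF z = auxL (z (i + 1) - z (i - 1)) (x - z i) := by
    unfold auxF
    rw [← Finset.sum_sub_distrib, Fintype.sum_eq_add i (i - 1) hi1.symm]
    · simp only [sub_add_cancel, Function.update_self, Function.update_of_ne hi1,
        Function.update_of_ne hi2]
      rw [auxL_swap x, auxL_swap (z i), auxL_sub, map_sub, map_sub]
      ring
    · rintro j ⟨hj1, hj2⟩
      have hj3 : j + 1 ≠ i := fun h => hj2 (by rw [← h]; ring)
      simp [Function.update_of_ne hj1, Function.update_of_ne hj3]
  linarith

/-- Let `f : ℝ^{2n} ≅ ℂⁿ → ℝ` be smooth with everywhere positive definite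
Hessian, `M = f⁻¹{1}` nonempty and compact, and `f(x₀) < 1` for some `x₀`.  Let `g` be the
gradient of `f` (characterized by `df_x(v) = ⟨g(x), v⟩`).  Then for every `k ≥ 3` there are
points `z₁,…,z_k ∈ M` (indices mod `k`) and nonzero reals `t₁,…,t_k` with
`z_{i+1} − z_{i−1} = tᵢ · (i·∇f(zᵢ))`, i.e. a `k`-periodic symplectic billiard trajectory. -/
theorem stmt_11 (n : ℕ) (hn : 1 ≤ n)
    (f : EuclideanSpace ℂ (Fin n) → ℝ) (hf : ContDiff ℝ (⊤ : ℕ∞) f)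
    (hhess : ∀ (x v : EuclideanSpace ℂ (Fin n)), v ≠ 0 →
        0 < iteratedFDeriv ℝ 2 f x ![v, v])
    (M : Set (EuclideanSpace ℂ (Fin n))) (hM : M = f ⁻¹' {1})
    (hMne : M.Nonempty) (hMcomp : IsCompact M)
    (x₀ : EuclideanSpace ℂ (Fin n)) (hx₀ : f x₀ < 1)
    (g : EuclideanSpace ℂ (Fin n) → EuclideanSpace ℂ (Fin n))
    (hg : ∀ x v, fderiv ℝ f x v = rinner (g x) v) :
    ∀ k : ℕ, 3 ≤ k →
      ∃ (z : ZMod k → EuclideanSpace ℂ (Fin n)) (t : ZMod k → ℝ),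
        (∀ i, z i ∈ M) ∧ (∀ i, t i ≠ 0) ∧
        ∀ i, z (i + 1) - z (i - 1) = t i • (Complex.I • g (z i)) := by
  intro k hk
  have : NeZero k := ⟨by omega⟩
  have h1 : (1 : ZMod k) ≠ 0 := by
    have : Fact (1 < k) := ⟨by omega⟩
    exact one_ne_zero
  have h2 : (2 : ZMod k) ≠ 0 := by
    intro h
    have h' : ((2 : ℕ) : ZMod k) = 0 := by exact_mod_cast h
    rw [ZMod.natCast_eq_zero_iff] at h'
    have := Nat.le_of_dvd (by norm_num) h'
    omega
  have hcf : Continuous f := hf.continuous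
  have hMf : ∀ z, z ∈ M ↔ f z = 1 := by intro z; simp [hM]
  -- the gradient does not vanish on `M`
  have hgne : ∀ z ∈ M, fderiv ℝ f z ≠ 0 := by
    intro z hz h0
    have hz1 := (hMf z).1 hz
    have hne : x₀ - z ≠ 0 := by
      intro h
      rw [sub_eq_zero.1 h] at hx₀
      linarith
    obtain ⟨hd, hc⟩ := aux_convex f hf hhess z (x₀ - z) hne
    have hd0 := hd 0
    simp only [zero_smul, add_zero, h0] at hd0
    have := hc.convexOn.le_slope_of_hasDerivAt (Set.mem_univ (0:ℝ)) (Set.mem_univ (1:ℝ))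
      (by norm_num) hd0
    simp [slope_def_field] at this
    linarith
  -- `M` is not contained in a line
  have hline : ∀ a u : EuclideanSpace ℂ (Fin n), u ≠ 0 → (∀ x ∈ M, ∃ s : ℝ, x = a + s • u) →
      False := by
    intro a u hu hall
    have hin : ∀ y, f y < 1 → ∃ s : ℝ, y = a + s • u := by
      intro y hy
      obtain ⟨hd, hc⟩ := aux_convex f hf hhess y u hu
      obtain ⟨s, hs⟩ := aux_line _ hc (by fun_prop) (by simpa using hy)
      obtain ⟨r, hr⟩ := hall _ ((hMf _).2 hs)
      exact ⟨r - s, by rw [sub_smul, ← add_sub_assoc, ← hr]; simp⟩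
    have hev : ∀ᶠ e : ℝ in nhds 0, f (x₀ + e • (Complex.I • u)) < 1 := by
      have hct : Continuous fun e : ℝ => f (x₀ + e • (Complex.I • u)) := by fun_prop
      exact hct.continuousAt.eventually_lt continuousAt_const (by simpa using hx₀)
    obtain ⟨d, hd, hball⟩ := Metric.eventually_nhds_iff.1 hev
    obtain ⟨r, hr⟩ := hin _ (hball (y := d / 2) (by simp [abs_of_pos hd]; linarith))
    obtain ⟨s, hs⟩ := hin _ hx₀
    have h3 : (d / 2) • (Complex.I • u) = (r - s) • u := by
      rw [sub_smul]
      have : (d / 2) • (Complex.I • u) = (a + r • u) - x₀ := by rw [← hr]; simp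
      rw [this, hs]
      abel
    have h4 : (((d / 2 : ℝ) : ℂ) * Complex.I - ((r - s : ℝ) : ℂ)) • u = 0 := by
      rw [sub_smul, mul_smul, Complex.coe_smul, Complex.coe_smul, h3, sub_self]
    rcases smul_eq_zero.1 h4 with h | h
    · have := congrArg Complex.im h
      simp at this
      linarith
    · exact hu h
  -- existence of a maximizer
  have hcompact : IsCompact (Set.univ.pi fun _ : ZMod k => M) := isCompact_univ_pi fun _ => hMcomp
  obtain ⟨m, hm⟩ := hMne
  obtain ⟨z, hzM, hzmax⟩ := hcompact.exists_isMaxOn ⟨fun _ => m, fun _ _ => hm⟩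
    (auxF_cont (n := n) (k := k)).continuousOn
  -- critical point equation
  have crit : ∀ z : ZMod k → EuclideanSpace ℂ (Fin n), (∀ i, z i ∈ M) →
      (∀ y : ZMod k → EuclideanSpace ℂ (Fin n), (∀ i, y i ∈ M) → auxF y ≤ auxF z) →
      ∀ i, ∃ c : ℝ, z (i + 1) - z (i - 1) = c • (Complex.I • g (z i)) := by
    intro z hz hmax i
    set w := z (i + 1) - z (i - 1) with hw
    have hext : IsLocalExtrOn (auxL w) {x | f x = f (z i)} (z i) := by
      right
      apply IsMaxOn.localize
      intro x hx
      have hxM : x ∈ M := by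
        rw [hMf]
        exact Eq.trans hx ((hMf _).1 (hz i))
      have := hmax (Function.update z i x) (by
        intro j
        by_cases hj : j = i
        · subst hj; simpa using hxM
        · simpa [Function.update_of_ne hj] using hz j)
      rw [auxF_update h1, map_sub] at this
      show auxL w x ≤ auxL w (z i)
      linarith
    have hfs : HasStrictFDerivAt f (fderiv ℝ f (z i)) (z i) :=
      hf.contDiffAt.hasStrictFDerivAt (by simp)
    obtain ⟨a, b, hab, hsum⟩ := hext.exists_multipliers_of_hasStrictFDerivAt_1d hfs
      (auxL w).hasStrictFDerivAt
    have hb : b ≠ 0 := by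
      rintro rfl
      simp only [zero_smul, add_zero] at hsum
      rcases smul_eq_zero.1 hsum with h | h
      · exact hab (by simp [h])
      · exact hgne _ (hz i) h
    refine ⟨-(a / b), auxL_nondeg _ _ _ fun x => ?_⟩
    have hx := DFunLike.congr_fun hsum x
    simp only [add_apply, smul_apply, smul_eq_mul, zero_apply, hg] at hx
    field_simp
    linarith
  have hzM' : ∀ i, z i ∈ M := fun i => hzM i (Set.mem_univ i)
  have hzmax' : ∀ y : ZMod k → EuclideanSpace ℂ (Fin n), (∀ i, y i ∈ M) → auxF y ≤ auxF z :=
    fun y hy => hzmax (fun i _ => hy i)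
  choose t ht using crit z hzM' hzmax'
  refine ⟨z, t, hzM', ?_, ht⟩
  intro i hti
  have hw : z (i + 1) - z (i - 1) = 0 := by rw [ht i, hti, zero_smul]
  have hi2 : i + 1 ≠ i := by simpa using h1
  have hi3 : i + 1 + 1 ≠ i := by
    rw [add_assoc]
    norm_num
    exact h2
  have hgz : g (z (i + 1)) ≠ 0 := by
    intro h
    apply hgne _ (hzM' (i + 1))
    ext v
    rw [hg, h]
    simp [rinner]
  refine hline (z (i + 1 + 1)) (Complex.I • g (z (i + 1)))
    (smul_ne_zero Complex.I_ne_zero hgz) ?_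
  intro x hx
  obtain ⟨c, hc⟩ := crit (Function.update z i x) (by
      intro j
      by_cases hj : j = i
      · subst hj; simpa using hx
      · simpa [Function.update_of_ne hj] using hzM' j) (by
      intro y hy
      rw [auxF_update h1, hw]
      have : auxL (0 : EuclideanSpace ℂ (Fin n)) (x - z i) = 0 := by simp [auxL_apply]
      rw [this, add_zero]
      exact hzmax' y hy) (i + 1)
  simp only [add_sub_cancel_right, Function.update_self, Function.update_of_ne hi2,
    Function.update_of_ne hi3] at hc
  refine ⟨-c, ?_⟩
  rw [neg_smul, ← hc]
  abel
end

section
/- Let n ≥ 1 and let a₁, …, aₙ be positive reals; define the ℝ-linear map R : ℂⁿ → ℂⁿ by (Rz)ⱼ = (i/aⱼ)·zⱼ, with inverse R⁻¹. Let Z₀, Z₁, Z₂, Z₃, Z₄ ∈ ℂⁿ be unit vectors (‖Zⱼ‖ = 1) and suppose there are positive reals t₁, t₂, t₃ with Z₂ − Z₀ = t₁·R(Z₁), Z₃ − Z₁ = t₂·R(Z₂), and Z₄ − Z₂ = t₃·R(Z₃). Set Wⱼ = R⁻¹(Zⱼ) for j = 0, 2, 4. Then: (a) each Wⱼ lies on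 the ellipsoid E = {w ∈ ℂⁿ : ∑ⱼ |wⱼ|²/aⱼ² = 1}; (b) W₀ ≠ W₂ and W₄ ≠ W₂; and (c) there exists t > 0 such that R²(W₂) = t·((W₀ − W₂)/‖W₀ − W₂‖ + (W₄ − W₂)/‖W₄ − W₂‖), i.e. the chord from W₀ to W₂ reflects to the chord from W₂ to W₄ under the usual (Birkhoff) billiard reflection in E, whose inward normal at W₂ is proportional to R²(W₂). -/
/-- Let `R : ℂⁿ → ℂⁿ`, `(Rz)ⱼ = (i/aⱼ)zⱼ` (with `aⱼ > 0`), `R⁻¹` its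
inverse.  If `Z₀,…,Z₄` are unit vectors with `Z₂ − Z₀ = t₁·R(Z₁)`, `Z₃ − Z₁ = t₂·R(Z₂)`,
`Z₄ − Z₂ = t₃·R(Z₃)` (`tᵢ > 0`), and `Wⱼ = R⁻¹(Zⱼ)` for `j = 0,2,4`, then the `Wⱼ` lie on
the ellipsoid `∑ |wⱼ|²/aⱼ² = 1`, `W₀ ≠ W₂ ≠ W₄`, and there is `t > 0` with
`R²(W₂) = t·((W₀−W₂)/‖W₀−W₂‖ + (W₄−W₂)/‖W₄−W₂‖)` (Birkhoff reflection in the ellipsoid). -/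
theorem stmt_12 (n : ℕ) (hn : 1 ≤ n) (a : Fin n → ℝ) (ha : ∀ j, 0 < a j)
    (R Rinv : EuclideanSpace ℂ (Fin n) → EuclideanSpace ℂ (Fin n))
    (hR : ∀ z j, R z j = (Complex.I / (a j : ℂ)) * z j)
    (hRinv : ∀ z j, Rinv z j = ((a j : ℂ) / Complex.I) * z j)
    (Z₀ Z₁ Z₂ Z₃ Z₄ : EuclideanSpace ℂ (Fin n))
    (hZ₀ : ‖Z₀‖ = 1) (hZ₁ : ‖Z₁‖ = 1) (hZ₂ : ‖Z₂‖ = 1) (hZ₃ : ‖Z₃‖ = 1) (hZ₄ : ‖Z₄‖ = 1)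
    (t₁ t₂ t₃ : ℝ) (ht₁ : 0 < t₁) (ht₂ : 0 < t₂) (ht₃ : 0 < t₃)
    (h₁ : Z₂ - Z₀ = t₁ • R Z₁)
    (h₂ : Z₃ - Z₁ = t₂ • R Z₂)
    (h₃ : Z₄ - Z₂ = t₃ • R Z₃)
    (W₀ W₂ W₄ : EuclideanSpace ℂ (Fin n))
    (hW₀ : W₀ = Rinv Z₀) (hW₂ : W₂ = Rinv Z₂) (hW₄ : W₄ = Rinv Z₄) :
    (∑ j, ‖W₀ j‖ ^ 2 / (a j) ^ 2 = 1) ∧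
    (∑ j, ‖W₂ j‖ ^ 2 / (a j) ^ 2 = 1) ∧
    (∑ j, ‖W₄ j‖ ^ 2 / (a j) ^ 2 = 1) ∧
    W₀ ≠ W₂ ∧ W₄ ≠ W₂ ∧
    ∃ t : ℝ, 0 < t ∧
      R (R W₂) = t • (‖W₀ - W₂‖⁻¹ • (W₀ - W₂) + ‖W₄ - W₂‖⁻¹ • (W₄ - W₂)) := by
  have haC : ∀ j, (a j : ℂ) ≠ 0 := fun j => by exact_mod_cast (ha j).ne'
  have hI := Complex.I_ne_zero
  have key : ∀ Z : EuclideanSpace ℂ (Fin n), ‖Z‖ = 1 →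
      ∑ j, ‖Rinv Z j‖ ^ 2 / (a j) ^ 2 = 1 := by
    intro Z hZ
    have h : ‖Z‖ ^ 2 = 1 := by rw [hZ]; norm_num
    rw [EuclideanSpace.norm_sq_eq] at h
    rw [← h]
    refine Finset.sum_congr rfl fun j _ => ?_
    have := (ha j).ne'
    rw [hRinv]
    simp only [norm_mul, norm_div, Complex.norm_I, Complex.norm_real, Real.norm_eq_abs, div_one,
      mul_pow, sq_abs]
    field_simp
  have d : ∀ (A B C : EuclideanSpace ℂ (Fin n)) (t : ℝ), A - B = t • R C →
      Rinv A - Rinv B = t • C := by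
    intro A B C t h
    ext j
    have hj := congrArg (fun v : EuclideanSpace ℂ (Fin n) => v j) h
    simp only [PiLp.sub_apply, PiLp.smul_apply, Complex.real_smul, hR, hRinv] at hj ⊢
    rw [← mul_sub, hj]
    have := haC j
    field_simp
  have hRR : R (R W₂) = R Z₂ := by
    ext j
    have := haC j
    rw [hR, hR, hR, hW₂, hRinv]
    field_simp
  have e₁ : W₂ - W₀ = t₁ • Z₁ := by rw [hW₂, hW₀]; exact d _ _ _ _ h₁
  have e₁' : W₀ - W₂ = -(t₁ • Z₁) := by rw [← e₁, neg_sub]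
  have e₃ : W₄ - W₂ = t₃ • Z₃ := by rw [hW₂, hW₄]; exact d _ _ _ _ h₃
  have n₁ : ‖W₀ - W₂‖ = t₁ := by
    rw [e₁', norm_neg, norm_smul, hZ₁, Real.norm_of_nonneg ht₁.le, mul_one]
  have n₃ : ‖W₄ - W₂‖ = t₃ := by
    rw [e₃, norm_smul, hZ₃, Real.norm_of_nonneg ht₃.le, mul_one]
  refine ⟨hW₀ ▸ key _ hZ₀, hW₂ ▸ key _ hZ₂, hW₄ ▸ key _ hZ₄, ?_, ?_, t₂⁻¹, inv_pos.2 ht₂, ?_⟩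
  · intro h
    rw [h, sub_self, norm_zero] at n₁
    exact ht₁.ne n₁
  · intro h
    rw [h, sub_self, norm_zero] at n₃
    exact ht₃.ne n₃
  · rw [n₁, n₃, e₁', e₃, hRR, smul_neg, smul_smul, smul_smul, inv_mul_cancel₀ ht₁.ne',
      inv_mul_cancel₀ ht₃.ne', one_smul, one_smul, neg_add_eq_sub, h₂, smul_smul,
      inv_mul_cancel₀ ht₂.ne', one_smul]
end

section
/- Let n ≥ 1 and let a₁,…,aₙ be positive reals; let A : ℂⁿ → ℂⁿ be the diagonal map (Az)ⱼ = aⱼ·zⱼ and A^{−1/2} the diagonal map with entries aⱼ^{−1/2}. Let f : ℝ → ℝ be a C¹ function with f(t) ≠ 0 for all t, and let x : ℝ → ℂⁿ be a C² curve satisfying the characteristic equation x'(t) = f(t)·(i·A x(t)) for all t and the normalization ⟨A x(0), x(0)⟩ = 1, where ⟨u,v⟩ = Re(∑ⱼ uⱼ·conj(vⱼ)). Set y(t) = A^{−1/2} x(t). Then for all t: ⟨A² y(t), y(t)⟩ = 1 and y''(t) = (f'(t)/f(t))·y'(t) − f(t)²·A² y(t). In particular, y''(t) lies in the span of y'(t)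 and the normal A²y(t) to the ellipsoid {⟨A²y, y⟩ = 1}, i.e. y is a (reparameterized) geodesic on that ellipsoid. -/
lemma coord_deriv {n : ℕ} {x : ℝ → EuclideanSpace ℂ (Fin n)} {v : EuclideanSpace ℂ (Fin n)}
    {t : ℝ} (h : HasDerivAt x v t) (j : Fin n) : HasDerivAt (fun s => x s j) (v j) t :=
  (((EuclideanSpace.proj j : EuclideanSpace ℂ (Fin n) →L[ℂ] ℂ).restrictScalars
    ℝ).hasFDerivAt).comp_hasDerivAt t h

lemma of_coord_deriv {n : ℕ} {x : ℝ → EuclideanSpace ℂ (Fin n)} {v : EuclideanSpace ℂ (Fin n)}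
    {t : ℝ} (h : ∀ j, HasDerivAt (fun s => x s j) (v j) t) : HasDerivAt x v t := by
  have h1 : HasDerivAt (fun s => (fun j => x s j)) (fun j => v j) t := hasDerivAt_pi.2 h
  exact ((((PiLp.continuousLinearEquiv 2 ℝ (fun _ : Fin n => ℂ)).symm :
    (Fin n → ℂ) →L[ℝ] EuclideanSpace ℂ (Fin n))).hasFDerivAt).comp_hasDerivAt t h1

/-- Let `A : ℂⁿ → ℂⁿ` be `(Az)ⱼ = aⱼzⱼ` (`aⱼ > 0`), `A^{−1/2}` the
diagonal map with entries `aⱼ^{−1/2}`.  If `x` is a `C²` characteristic curve,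
`x'(t) = f(t)·(i·Ax(t))` with `f` a nonvanishing `C¹` function, normalized so that
`⟨Ax(0), x(0)⟩ = 1`, then `y = A^{−1/2}x` satisfies `⟨A²y(t), y(t)⟩ = 1` and
`y'' = (f'/f)·y' − f²·A²y`; i.e. `y` is a reparameterized geodesic on `{⟨A²y,y⟩ = 1}`. -/
theorem stmt_13 (n : ℕ) (hn : 1 ≤ n) (a : Fin n → ℝ) (ha : ∀ j, 0 < a j)
    (A Asqrtinv : EuclideanSpace ℂ (Fin n) → EuclideanSpace ℂ (Fin n))
    (hA : ∀ z j, A z j = (a j : ℂ) * z j)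
    (hAsqrtinv : ∀ z j, Asqrtinv z j = (((Real.sqrt (a j))⁻¹ : ℝ) : ℂ) * z j)
    (f : ℝ → ℝ) (hf : ContDiff ℝ 1 f) (hf0 : ∀ t, f t ≠ 0)
    (x : ℝ → EuclideanSpace ℂ (Fin n)) (hx : ContDiff ℝ 2 x)
    (hchar : ∀ t, deriv x t = f t • (Complex.I • A (x t)))
    (hnorm : rinner (A (x 0)) (x 0) = 1)
    (y : ℝ → EuclideanSpace ℂ (Fin n)) (hy : ∀ t, y t = Asqrtinv (x t)) :
    ∀ t, rinner (A (A (y t))) (y t) = 1 ∧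
      deriv (deriv y) t = (deriv f t / f t) • deriv y t - (f t ^ 2) • A (A (y t)) := by
  have hxd : ∀ t, HasDerivAt x (f t • (Complex.I • A (x t))) t := by
    intro t
    rw [← hchar t]
    exact ((hx.differentiable (by norm_num)) t).hasDerivAt
  have hxj : ∀ t j, HasDerivAt (fun s => x s j) ((f t : ℂ) * (Complex.I * ((a j : ℂ) * x t j))) t := by
    intro t j
    have h := coord_deriv (hxd t) j
    simpa [hA] using h
  have hyj : ∀ t j, y t j = (((Real.sqrt (a j))⁻¹ : ℝ) : ℂ) * x t j := by
    intro t j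
    rw [hy, hAsqrtinv]
  have hyd : ∀ t, HasDerivAt y (f t • (Complex.I • A (y t))) t := by
    intro t
    apply of_coord_deriv
    intro j
    have h := (hxj t j).const_mul (((Real.sqrt (a j))⁻¹ : ℝ) : ℂ)
    refine (h.congr_deriv ?_).congr_of_eventuallyEq (Filter.Eventually.of_forall fun s => hyj s j)
    simp only [PiLp.smul_apply, hA, hyj, Complex.real_smul, smul_eq_mul]
    ring
  have hdy : deriv y = fun t => f t • (Complex.I • A (y t)) := funext fun t => (hyd t).deriv
  have hfd : ∀ t, HasDerivAt f (deriv f t) t := fun t =>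
    ((hf.differentiable (by norm_num)) t).hasDerivAt
  have hconst : ∀ t j, Complex.normSq (x t j) = Complex.normSq (x 0 j) := by
    intro t j
    have hd : ∀ t, HasDerivAt (fun s => x s j * (starRingEnd ℂ) (x s j)) 0 t := by
      intro t
      have h := (hxj t j).mul (hxj t j).star
      refine h.congr_deriv ?_
      simp
      ring
    have h := is_const_of_deriv_eq_zero (fun s => (hd s).differentiableAt)
      (fun s => (hd s).deriv) t 0
    simp only [Complex.mul_conj] at h
    exact_mod_cast h
  intro t
  constructor
  · rw [← hnorm]
    simp only [rinner, PiLp.inner_apply, hA, hyj, Complex.re_sum]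
    refine Finset.sum_congr rfl fun j _ => ?_
    have h1 := hconst t j
    have hs : Real.sqrt (a j) ≠ 0 := (Real.sqrt_pos.2 (ha j)).ne'
    have hsq : Real.sqrt (a j) ^ 2 = a j := Real.sq_sqrt (ha j).le
    generalize Real.sqrt (a j) = s at *
    simp only [Complex.normSq_apply] at h1
    simp
    rw [← hsq]
    field_simp
    linear_combination h1
  · have h2 : HasDerivAt (deriv y) ((deriv f t / f t) • deriv y t - (f t ^ 2) • A (A (y t))) t := by
      rw [hdy]
      apply of_coord_deriv
      intro j
      have h := (hfd t).ofReal_comp.mul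
        (((coord_deriv (hyd t) j).const_mul (a j : ℂ)).const_mul Complex.I)
      have h0 : (f t : ℂ) ≠ 0 := by exact_mod_cast hf0 t
      refine (h.congr_deriv ?_).congr_of_eventuallyEq (Filter.Eventually.of_forall fun s => ?_)
      · simp [hA]
        field_simp
        ring_nf
        simp [Complex.I_sq]
        ring
      · simp [hA]
    exact h2.deriv
end

section
/- Let n ≥ 1 and let a₁,…,aₙ be positive reals; let A : ℂⁿ → ℂⁿ be the diagonal map (Az)ⱼ = aⱼzⱼ, and A^{1/2}, A^{−1} the diagonal maps with entries aⱼ^{1/2}, aⱼ^{−1}. Let f, g : ℝ → ℝ be C¹ functions with f nonvanishing, and let y : ℝ → ℂⁿ be a C² curve with ⟨A² y(t), y(t)⟩ = 1 for all t, y'(0) ≠ 0, and y''(t) = (f'(t)/f(t))·y'(t) + g(t)·A² y(t) for all t, where ⟨u,v⟩ = Re(∑ⱼ uⱼ·conj(vⱼ)). Set x(t) = A^{1/2} y(t). Then there exists a constant c > 0 such that the curve x̄(t) := (c/f(t))·(i·A^{−1} x'(t)) satisfies, for all t: ⟨A x(t), x(t)⟩ = 1, ⟨A x̄(t), x̄(t)⟩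 = 1, x'(t) ∈ ℝ·(i·A x̄(t)), and x̄'(t) ∈ ℝ·(i·A x(t)). -/
/-- diagonal real operator as a real continuous linear map -/
noncomputable def diagL {n : ℕ} (d : Fin n → ℝ) :
    EuclideanSpace ℂ (Fin n) →L[ℝ] EuclideanSpace ℂ (Fin n) :=
  LinearMap.toContinuousLinearMap
    { toFun := fun z => WithLp.toLp 2 (fun j => (d j : ℂ) * z j)
      map_add' := by
        intro u v
        ext j
        simp [mul_add]
      map_smul' := by
        intro r v
        ext j
        simp
        ring }

theorem diagL_apply {n : ℕ} (d : Fin n → ℝ) (z : EuclideanSpace ℂ (Fin n)) (j : Fin n) :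
    diagL d z j = (d j : ℂ) * z j := rfl

theorem rinner_sum {n : ℕ} (u v : EuclideanSpace ℂ (Fin n)) :
    rinner u v = ∑ j, ((u j).re * (v j).re + (u j).im * (v j).im) := by
  unfold rinner
  rw [PiLp.inner_apply, Complex.re_sum]
  refine Finset.sum_congr rfl fun j _ => ?_
  simp [Complex.mul_re]
  ring

theorem rinner_deriv {n : ℕ} {u v : ℝ → EuclideanSpace ℂ (Fin n)}
    {u' v' : EuclideanSpace ℂ (Fin n)} {t : ℝ}
    (hu : HasDerivAt u u' t) (hv : HasDerivAt v v' t) :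
    HasDerivAt (fun s => rinner (u s) (v s)) (rinner (u t) v' + rinner u' (v t)) t := by
  have h := hu.inner ℂ hv
  have h2 := Complex.reCLM.hasFDerivAt.comp_hasDerivAt t h
  simpa [rinner, Function.comp_def] using h2

/-- Let `A` be the diagonal map `(Az)ⱼ = aⱼzⱼ` (`aⱼ > 0`), and `A^{1/2}`,
`A^{−1}` the diagonal maps with entries `aⱼ^{1/2}`, `aⱼ^{−1}`.  Let `y` be a `C²` geodesic-type
curve on the ellipsoid `⟨A²y,y⟩ = 1` with `y'(0) ≠ 0` and
`y'' = (f'/f)·y' + g·A²y` (`f` nonvanishing `C¹`, `g` `C¹`).  Set `x = A^{1/2}y`.  Then there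
is a constant `c > 0` such that `x̄(t) = (c/f(t))·(i·A⁻¹x'(t))` satisfies: both `x` and `x̄`
lie on the ellipsoid `⟨Aξ,ξ⟩ = 1`, `x'(t) ∈ ℝ·(i·A x̄(t))` and `x̄'(t) ∈ ℝ·(i·A x(t))`. -/
theorem stmt_14 (n : ℕ) (hn : 1 ≤ n) (a : Fin n → ℝ) (ha : ∀ j, 0 < a j)
    (A Asqrt Ainv : EuclideanSpace ℂ (Fin n) → EuclideanSpace ℂ (Fin n))
    (hA : ∀ z j, A z j = (a j : ℂ) * z j)
    (hAsqrt : ∀ z j, Asqrt z j = ((Real.sqrt (a j) : ℝ) : ℂ) * z j)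
    (hAinv : ∀ z j, Ainv z j = (((a j)⁻¹ : ℝ) : ℂ) * z j)
    (f g : ℝ → ℝ) (hf : ContDiff ℝ 1 f) (hg : ContDiff ℝ 1 g) (hf0 : ∀ t, f t ≠ 0)
    (y : ℝ → EuclideanSpace ℂ (Fin n)) (hy : ContDiff ℝ 2 y)
    (hnorm : ∀ t, rinner (A (A (y t))) (y t) = 1)
    (hy'0 : deriv y 0 ≠ 0)
    (hgeo : ∀ t, deriv (deriv y) t
        = (deriv f t / f t) • deriv y t + g t • A (A (y t)))
    (x : ℝ → EuclideanSpace ℂ (Fin n)) (hx : ∀ t, x t = Asqrt (y t)) :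
    ∃ c : ℝ, 0 < c ∧ ∀ t,
      rinner (A (x t)) (x t) = 1 ∧
      rinner (A ((c / f t) • (Complex.I • Ainv (deriv x t))))
          ((c / f t) • (Complex.I • Ainv (deriv x t))) = 1 ∧
      (∃ s : ℝ, deriv x t = s • (Complex.I • A ((c / f t) • (Complex.I • Ainv (deriv x t))))) ∧
      (∃ s : ℝ, deriv (fun u => (c / f u) • (Complex.I • Ainv (deriv x u))) t
          = s • (Complex.I • A (x t))) := by
  have eA : A = diagL a := by
    funext z; ext j; rw [hA, diagL_apply]
  have eS : Asqrt = diagL (fun j => Real.sqrt (a j)) := by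
    funext z; ext j; rw [hAsqrt, diagL_apply]
  have eI : Ainv = diagL (fun j => (a j)⁻¹) := by
    funext z; ext j; rw [hAinv, diagL_apply]
  have ex : x = fun t => diagL (fun j => Real.sqrt (a j)) (y t) := by
    funext t; rw [hx, eS]
  have hyd : ∀ t, HasDerivAt y (deriv y t) t := fun t =>
    (hy.differentiable (by norm_num) t).hasDerivAt
  have hy1 : ContDiff ℝ 1 (deriv y) := by
    have h : ContDiff ℝ (1 + 1) y := by
      rw [one_add_one_eq_two]; exact hy
    exact (contDiff_succ_iff_deriv.1 h).2.2
  have hydd : ∀ t, HasDerivAt (deriv y) (deriv (deriv y) t) t := fun t =>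
    (hy1.differentiable (by norm_num) t).hasDerivAt
  have hfd : ∀ t, HasDerivAt f (deriv f t) t := fun t =>
    (hf.differentiable (by norm_num) t).hasDerivAt
  have hxd : ∀ t, deriv x t = diagL (fun j => Real.sqrt (a j)) (deriv y t) := by
    intro t
    rw [ex]
    exact ((diagL (fun j => Real.sqrt (a j))).hasFDerivAt.comp_hasDerivAt t (hyd t)).deriv
  subst eA eI
  -- the rescaled velocity
  have hw : ∀ t, HasDerivAt (fun u => (f u)⁻¹ • deriv y u)
      ((g t / f t) • diagL a (diagL a (y t))) t := by
    intro t
    have h := ((hfd t).inv (hf0 t)).smul (hydd t)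
    refine HasDerivAt.congr_deriv (f := fun u => (f u)⁻¹ • deriv y u) h ?_
    rw [hgeo t]
    have := hf0 t
    rw [smul_add, smul_smul, smul_smul, add_right_comm, ← add_smul]
    have h0 : (f⁻¹ t * (deriv f t / f t) + -deriv f t / f t ^ 2) = 0 := by
      simp only [Pi.inv_apply]; field_simp; ring
    rw [h0, zero_smul, zero_add]
    congr 1
    simp only [Pi.inv_apply]; field_simp
  have horth : ∀ t, rinner (diagL a (diagL a (y t))) (deriv y t) = 0 := by
    intro t
    have h1 := rinner_deriv ((diagL a).hasFDerivAt.comp_hasDerivAt t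
      ((diagL a).hasFDerivAt.comp_hasDerivAt t (hyd t))) (hyd t)
    have h2 : (fun s => rinner (diagL a (diagL a (y s))) (y s)) = fun _ => (1:ℝ) :=
      funext hnorm
    have h3 := h1.unique (f := fun s => rinner (diagL a (diagL a (y s))) (y s))
      (by rw [h2]; exact hasDerivAt_const t 1)
    have h4 : rinner (diagL a (diagL a (deriv y t))) (y t)
        = rinner (diagL a (diagL a (y t))) (deriv y t) := by
      rw [rinner_sum, rinner_sum]
      refine Finset.sum_congr rfl fun j _ => ?_
      simp only [diagL_apply, Complex.re_ofReal_mul, Complex.im_ofReal_mul]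
      ring
    simp only [Function.comp_apply] at h3
    linarith
  have hcomm : ∀ u v : EuclideanSpace ℂ (Fin n), rinner u v = rinner v u := by
    intro u v
    rw [rinner_sum, rinner_sum]
    refine Finset.sum_congr rfl fun j _ => ?_
    ring
  have hsm : ∀ (r s : ℝ) (u v : EuclideanSpace ℂ (Fin n)),
      rinner (r • u) (s • v) = r * s * rinner u v := by
    intro r s u v
    rw [rinner_sum, rinner_sum, Finset.mul_sum]
    refine Finset.sum_congr rfl fun j _ => ?_
    simp
    ring
  have hconst : ∀ t, rinner ((f t)⁻¹ • deriv y t) ((f t)⁻¹ • deriv y t)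
      = rinner ((f 0)⁻¹ • deriv y 0) ((f 0)⁻¹ • deriv y 0) := by
    have hd : ∀ t, HasDerivAt (fun s => rinner ((f s)⁻¹ • deriv y s) ((f s)⁻¹ • deriv y s))
        0 t := by
      intro t
      have h := rinner_deriv (hw t) (hw t)
      refine h.congr_deriv ?_
      rw [hsm, hsm, hcomm (deriv y t), horth]
      ring
    intro t
    exact is_const_of_deriv_eq_zero (fun t => (hd t).differentiableAt)
      (fun t => (hd t).deriv) t 0
  obtain ⟨K, hK⟩ : ∃ K, K = rinner ((f 0)⁻¹ • deriv y 0) ((f 0)⁻¹ • deriv y 0) := ⟨_, rfl⟩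
  have hKpos : 0 < K := by
    rw [hK]
    unfold rinner
    have h := inner_self_eq_norm_sq (𝕜 := ℂ) ((f 0)⁻¹ • deriv y 0)
    have h2 : 0 < ‖(f 0)⁻¹ • deriv y 0‖ :=
      norm_pos_iff.2 (smul_ne_zero (inv_ne_zero (hf0 0)) hy'0)
    refine lt_of_lt_of_eq (pow_pos h2 2) h.symm
  have hc : 0 < (Real.sqrt K)⁻¹ := inv_pos.2 (Real.sqrt_pos.2 hKpos)
  have hcK : (Real.sqrt K)⁻¹ * (Real.sqrt K)⁻¹ * K = 1 := by
    rw [← mul_inv, Real.mul_self_sqrt hKpos.le, inv_mul_cancel₀ hKpos.ne']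
  generalize (Real.sqrt K)⁻¹ = c at hc hcK
  refine ⟨c, hc, fun t => ⟨?_, ?_, ⟨-(f t / c), ?_⟩, ⟨c * (g t / f t), ?_⟩⟩⟩
  · rw [← hnorm t, ex, rinner_sum, rinner_sum]
    refine Finset.sum_congr rfl fun j _ => ?_
    simp only [diagL_apply, Complex.re_ofReal_mul, Complex.im_ofReal_mul]
    have := Real.mul_self_sqrt (ha j).le
    linear_combination (a j * ((y t j).re ^ 2 + (y t j).im ^ 2)) * this
  · rw [hxd, ← hcK, hK, ← hconst t, hsm, rinner_sum, rinner_sum, Finset.mul_sum, Finset.mul_sum]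
    refine Finset.sum_congr rfl fun j _ => ?_
    have h1 := Real.mul_self_sqrt (ha j).le
    have h2 := (ha j).ne'
    have h3 : a j * (a j)⁻¹ = 1 := mul_inv_cancel₀ h2
    have h4 : a j * (a j)⁻¹ * (a j)⁻¹ * (√(a j) * √(a j)) = 1 := by
      rw [h1, h3, one_mul, inv_mul_cancel₀ h2]
    simp only [diagL_apply, PiLp.smul_apply, Complex.real_smul, smul_eq_mul,
      Complex.re_ofReal_mul, Complex.im_ofReal_mul, Complex.I_mul_re, Complex.I_mul_im]
    linear_combination (c ^ 2 * (f t)⁻¹ ^ 2 * ((deriv y t j).re ^ 2 + (deriv y t j).im ^ 2)) * h4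
  · ext j
    have h2 : (a j : ℂ) ≠ 0 := by exact_mod_cast (ha j).ne'
    have h3 : (c : ℂ) ≠ 0 := by exact_mod_cast hc.ne'
    have h4 : (f t : ℂ) ≠ 0 := by exact_mod_cast hf0 t
    simp only [diagL_apply, PiLp.smul_apply, Complex.real_smul, smul_eq_mul]
    push_cast
    field_simp
    rw [Complex.I_sq]
    ring
  · have hfun : (fun u => (c / f u) • (Complex.I • diagL (fun j => (a j)⁻¹) (deriv x u)))
        = fun u => c • (Complex.I • diagL (fun j => (a j)⁻¹ * Real.sqrt (a j))
            ((f u)⁻¹ • deriv y u)) := by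
      funext u
      rw [hxd]
      ext j
      simp only [diagL_apply, PiLp.smul_apply, Complex.real_smul, smul_eq_mul]
      push_cast
      ring
    rw [hfun]
    have h := ((((diagL (fun j => (a j)⁻¹ * Real.sqrt (a j))).hasFDerivAt.comp_hasDerivAt t
      (hw t)).const_smul Complex.I).const_smul c).deriv
    refine Eq.trans h ?_
    rw [ex]
    ext j
    have h2 : (a j : ℂ) ≠ 0 := by exact_mod_cast (ha j).ne'
    simp only [diagL_apply, PiLp.smul_apply, Complex.real_smul, smul_eq_mul]
    push_cast
    field_simp
end

section
/- Let n ≥ 1 and let a₁,…,aₙ be positive reals; define R : ℂⁿ → ℂⁿ by (Rz)ⱼ = (i/aⱼ)·zⱼ, and let ⟨u,v⟩ = Re(∑ⱼ uⱼ·conj(vⱼ)) be the real inner product on ℂⁿ. Let Z₀, Z₁ ∈ ℂⁿ with Z₁ ≠ 0, and set Z₂ = Z₀ + (2⟨R Z₀, Z₁⟩/‖R Z₁‖²)·R Z₁. Then: (a) ⟨R Z₁, Z₂⟩ = ⟨R Z₀, Z₁⟩; and (b) for every index k ∈ {1,…,n}, Re((Z₁)ₖ · conj((Z₂)ₖ))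 = Re((Z₀)ₖ · conj((Z₁)ₖ)). -/
/-- For the symplectic billiard map in the unit sphere of `ℂⁿ` with
characteristic operator `(Rz)ⱼ = (i/aⱼ)zⱼ`, sending `(Z₀,Z₁)` to `(Z₁,Z₂)` with
`Z₂ = Z₀ + (2⟨RZ₀,Z₁⟩/‖RZ₁‖²)·RZ₁`, the quantities `J = ⟨RZ₀,Z₁⟩` and
`Iₖ = Re((Z₀)ₖ·conj((Z₁)ₖ))` are integrals of motion. -/
theorem stmt_15 (n : ℕ) (hn : 1 ≤ n) (a : Fin n → ℝ) (ha : ∀ j, 0 < a j)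
    (R : EuclideanSpace ℂ (Fin n) → EuclideanSpace ℂ (Fin n))
    (hR : ∀ z j, R z j = (Complex.I / (a j : ℂ)) * z j)
    (Z₀ Z₁ Z₂ : EuclideanSpace ℂ (Fin n)) (hZ₁ : Z₁ ≠ 0)
    (hZ₂ : Z₂ = Z₀ + ((2 * rinner (R Z₀) Z₁) / ‖R Z₁‖ ^ 2) • R Z₁) :
    rinner (R Z₁) Z₂ = rinner (R Z₀) Z₁ ∧
    ∀ k : Fin n, (Z₁ k * (starRingEnd ℂ) (Z₂ k)).re
      = (Z₀ k * (starRingEnd ℂ) (Z₁ k)).re := by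
  have hanti : rinner (R Z₁) Z₀ = - rinner (R Z₀) Z₁ := by
    simp only [rinner, PiLp.inner_apply, Complex.re_sum, ← Finset.sum_neg_distrib, hR]
    refine Finset.sum_congr rfl fun j _ => ?_
    have : (Complex.I / (a j : ℂ)) = ⟨0, (a j)⁻¹⟩ := by
      rw [div_eq_mul_inv, ← Complex.ofReal_inv]
      apply Complex.ext <;> simp
    rw [this]
    simp [Complex.mul_re, Complex.mul_im]
    ring
  have hne : ‖R Z₁‖ ≠ 0 := by
    intro h
    apply hZ₁
    have h0 : R Z₁ = 0 := norm_eq_zero.mp h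
    ext j
    have h1 := hR Z₁ j
    rw [h0] at h1
    have h2 : (a j : ℂ) ≠ 0 := by exact_mod_cast (ha j).ne'
    have h3 : Complex.I / (a j : ℂ) ≠ 0 := div_ne_zero Complex.I_ne_zero h2
    have h4 : (Complex.I / (a j : ℂ)) * Z₁ j = 0 := h1.symm
    simpa using (mul_eq_zero.mp h4).resolve_left h3
  constructor
  · have hlin : ∀ c : ℝ, rinner (R Z₁) (Z₀ + c • R Z₁)
        = rinner (R Z₁) Z₀ + c * ‖R Z₁‖ ^ 2 := by
      intro c
      have hc : c • R Z₁ = (c : ℂ) • R Z₁ := by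
        ext j
        simp
      rw [hc]
      simp only [rinner, inner_add_right, inner_smul_right, inner_self_eq_norm_sq_to_K,
        Complex.add_re, Complex.re_ofReal_mul]
      congr 2
      norm_cast
    rw [hZ₂, hlin, hanti]
    field_simp
    ring
  · intro k
    generalize (2 * rinner (R Z₀) Z₁) / ‖R Z₁‖ ^ 2 = c at hZ₂
    have h : Z₂ k = Z₀ k + (c : ℂ) * ((Complex.I / (a k : ℂ)) * Z₁ k) := by
      rw [hZ₂, ← hR]
      simp
    have : (Complex.I / (a k : ℂ)) = ⟨0, (a k)⁻¹⟩ := by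
      rw [div_eq_mul_inv, ← Complex.ofReal_inv]
      apply Complex.ext <;> simp
    rw [h, this]
    simp [Complex.mul_re, Complex.mul_im]
    ring
end

section
/- Let n ≥ 1 and let a₁ < a₂ < … < aₙ be positive reals; define R : ℂⁿ → ℂⁿ by (Rz)ⱼ = (i/aⱼ)·zⱼ. Let k be an integer with 2 ≤ k < 2n and let Z₁, …, Z_k ∈ ℂⁿ (indices mod k) be unit vectors such that for every j there is a real tⱼ > 0 with Z_{j+1} − Z_{j−1} = tⱼ·R(Zⱼ). Then there exists a subset S ⊆ {1,…,n} with card(S) ≤ ⌊k/2⌋ such that (Zⱼ)ₘ = 0 for every j and every coordinate index m ∉ S; that is, the orbit is contained in the complex coordinate subspace spanned by the coordinate lines indexed by S, whose real dimension 2·card(S) is at most k if k is even and at most k − 1 if k is odd. -/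
/-- Let `0 < a₁ < … < aₙ` and `(Rz)ⱼ = (i/aⱼ)zⱼ`.  If `Z₁,…,Z_k`
(indices mod `k`, `2 ≤ k < 2n`) are unit vectors with `Z_{j+1} − Z_{j−1} = tⱼ·R(Zⱼ)`,
`tⱼ > 0` (a `k`-periodic symplectic billiard orbit), then the orbit lies in a complex
coordinate subspace spanned by at most `⌊k/2⌋` coordinate lines. -/
theorem stmt_16 (n : ℕ) (hn : 1 ≤ n) (a : Fin n → ℝ) (ha : ∀ j, 0 < a j)
    (hmono : StrictMono a)
    (R : EuclideanSpace ℂ (Fin n) → EuclideanSpace ℂ (Fin n))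
    (hR : ∀ z j, R z j = (Complex.I / (a j : ℂ)) * z j)
    (k : ℕ) (hk2 : 2 ≤ k) (hk : k < 2 * n)
    (Z : ZMod k → EuclideanSpace ℂ (Fin n)) (hZ : ∀ j, ‖Z j‖ = 1)
    (t : ZMod k → ℝ) (ht : ∀ j, 0 < t j)
    (hrefl : ∀ j, Z (j + 1) - Z (j - 1) = t j • R (Z j)) :
    ∃ S : Finset (Fin n), S.card ≤ k / 2 ∧
      ∀ (j : ZMod k) (m : Fin n), m ∉ S → Z j m = 0 := by
  classical
  haveI : NeZero k := ⟨by omega⟩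
  let f : Module.End ℂ (ZMod k → ℂ) :=
    { toFun := fun w j => ((t j : ℂ))⁻¹ * (w (j + 1) - w (j - 1))
      map_add' := by intro x y; ext j; simp; ring
      map_smul' := by intro c x; ext j; simp; ring }
  have hf : ∀ w j, f w j = ((t j : ℂ))⁻¹ * (w (j + 1) - w (j - 1)) := fun _ _ => rfl
  have htc : ∀ j, (t j : ℂ) ≠ 0 := fun j => by exact_mod_cast (ht j).ne'
  have hrec : ∀ m j, Z (j + 1) m - Z (j - 1) m = (t j : ℂ) * ((Complex.I / (a m : ℂ)) * Z j m) := by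
    intro m j
    have h := congrArg (fun v : EuclideanSpace ℂ (Fin n) => v m) (hrefl j)
    simpa [hR] using h
  let S : Finset (Fin n) := Finset.univ.filter (fun m => ∃ j, Z j m ≠ 0)
  have hS : ∀ m, m ∈ S ↔ ∃ j, Z j m ≠ 0 := by intro m; simp [S]
  refine ⟨S, ?_, ?_⟩
  swap
  · intro j m hm
    by_contra h
    exact hm ((hS m).2 ⟨j, h⟩)
  let r : S ⊕ S → ℝ := Sum.elim (fun m => (a m)⁻¹) (fun m => -(a m)⁻¹)
  let μ : S ⊕ S → ℂ := fun x => Complex.I * (r x : ℂ)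
  have hr : Function.Injective r := by
    rintro (x | x) (y | y) h
    · have : a x = a y := by simpa [r] using h
      rw [Subtype.ext (hmono.injective this)]
    · have h' : (a x)⁻¹ = -(a y)⁻¹ := h
      have h1 := inv_pos.2 (ha x)
      have h2 := inv_pos.2 (ha y)
      linarith
    · have h' : -(a x)⁻¹ = (a y)⁻¹ := h
      have h1 := inv_pos.2 (ha x)
      have h2 := inv_pos.2 (ha y)
      linarith
    · have : a x = a y := by simpa [r] using h
      rw [Subtype.ext (hmono.injective this)]
  have hμ : Function.Injective μ := by
    intro x y h
    apply hr
    have := mul_left_cancel₀ Complex.I_ne_zero h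
    exact_mod_cast this
  let v : S ⊕ S → (ZMod k → ℂ) := Sum.elim (fun m j => Z j m) (fun m j => (starRingEnd ℂ) (Z j m))
  have hv : ∀ x, f.HasEigenvector (μ x) (v x) := by
    rintro (⟨m, hm⟩ | ⟨m, hm⟩)
    · refine Module.End.hasEigenvector_iff.2 ⟨Module.End.mem_eigenspace_iff.2 ?_, ?_⟩
      · ext j
        rw [hf]
        simp only [v, μ, r, Sum.elim_inl, Pi.smul_apply, smul_eq_mul]
        rw [hrec, inv_mul_cancel_left₀ (htc j)]
        push_cast
        ring
      · obtain ⟨j, hj⟩ := (hS m).1 hm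
        intro h
        exact hj (congrFun h j)
    · refine Module.End.hasEigenvector_iff.2 ⟨Module.End.mem_eigenspace_iff.2 ?_, ?_⟩
      · ext j
        rw [hf]
        simp only [v, μ, r, Sum.elim_inr, Pi.smul_apply, smul_eq_mul]
        rw [← map_sub, hrec, map_mul, Complex.conj_ofReal, inv_mul_cancel_left₀ (htc j)]
        simp
        ring
      · obtain ⟨j, hj⟩ := (hS m).1 hm
        intro h
        have := congrFun h j
        simp [v] at this
        exact hj this
  have hli := Module.End.eigenvectors_linearIndependent' f μ hμ v hv
  have hc := hli.fintype_card_le_finrank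
  simp [ZMod.card] at hc
  omega
end

section
/- Identify ℝ^{2n} with ℂⁿ (n ≥ 1), with real inner product ⟨u,v⟩ = Re(∑ⱼ uⱼ·conj(vⱼ)) and symplectic form ω(u,v) = ⟨i·u, v⟩. Let z₀, z₁ ∈ ℂⁿ with ‖z₀‖ = ‖z₁‖ = 1, and define z₂ = z₀ + 2·ω(z₀,z₁)·(i·z₁). Then ‖z₂‖ = 1 and ω(z₁, z₂) = ω(z₀, z₁). -/
/-- The symplectic billiard map in the round unit sphere,
`z₂ = z₀ + 2ω(z₀,z₁)·(i·z₁)`, is well defined (`‖z₂‖ = 1`) and `ω(z₀,z₁)` is an integral: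
`ω(z₁,z₂) = ω(z₀,z₁)`. -/
theorem stmt_17 (n : ℕ) (hn : 1 ≤ n) (z₀ z₁ z₂ : EuclideanSpace ℂ (Fin n))
    (h₀ : ‖z₀‖ = 1) (h₁ : ‖z₁‖ = 1)
    (h₂ : z₂ = z₀ + (2 * symp z₀ z₁) • (Complex.I • z₁)) :
    ‖z₂‖ = 1 ∧ symp z₁ z₂ = symp z₀ z₁ := by
  have hw : symp z₀ z₁ = (inner ℂ z₀ z₁ : ℂ).im := by
    simp [symp, rinner, inner_smul_left]
  have h11 : (inner ℂ z₁ z₁ : ℂ) = 1 := by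
    rw [inner_self_eq_norm_sq_to_K, h₁]; simp
  have h10 : (inner ℂ z₁ z₀ : ℂ).im = -(inner ℂ z₀ z₁ : ℂ).im := by
    rw [← inner_conj_symm, Complex.conj_im]
  have e : z₂ = z₀ + (((2 * symp z₀ z₁ : ℝ) : ℂ) * Complex.I) • z₁ := by
    rw [h₂, mul_smul _ Complex.I, Complex.coe_smul]
  rw [hw] at e
  constructor
  · have h : ‖z₂‖ ^ 2 = 1 := by
      rw [e, @norm_add_sq ℂ, norm_smul, inner_smul_right, h₀, h₁]
      simp [mul_pow]
      ring
    nlinarith [norm_nonneg z₂]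
  · rw [hw]
    simp only [symp, rinner, inner_smul_left]
    rw [e, inner_add_right, inner_smul_right, h11]
    simp [h10]
    ring
end

section
/- Identify ℝ^{2n} with ℂⁿ (n ≥ 1). Let p ∈ ℤ and q ≥ 1 be integers, set α = 2πp/q and assume cos α ≠ 0. Let z₀, z₁ ∈ ℂⁿ and define (z_m) by z_{m+2} = z_m + (2 sin α)·(i·z_{m+1}) for all m ≥ 0. Then: (a) z_{m+2q} = z_m for all m ≥ 0; (b) if q is even, then z_{m+q} = z_m for all m ≥ 0; (c) if q is odd, then z_q = z₀ if and only if z₁ = exp(iα)·z₀. -/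
open Real

theorem closed_form_aux (a b s : ℂ) (hs : a + b = s) (hab : a * b = -1) (w : ℕ → ℂ)
    (h : ∀ m, w (m + 2) = w m + s * w (m + 1)) (m : ℕ) :
    (a - b) * w m = a ^ m * (w 1 - b * w 0) - b ^ m * (w 1 - a * w 0) := by
  induction m using Nat.strong_induction_on with
  | _ m ih =>
    match m, ih with
    | 0, _ => ring
    | 1, _ => ring
    | k + 2, ih =>
      have h0 := ih k (by omega)
      have h1 := ih (k + 1) (by omega)
      rw [h k, ← hs]
      linear_combination h0 + (a + b) * h1 +
        (a ^ k * (w 1 - b * w 0) - b ^ k * (w 1 - a * w 0)) * hab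

/-- Let `α = 2πp/q` (`p ∈ ℤ`, `q ≥ 1`) with `cos α ≠ 0`, and let `(z_m)`
in `ℂⁿ` satisfy `z_{m+2} = z_m + (2 sin α)·(i·z_{m+1})`.  Then: (a) `z_{m+2q} = z_m` for all
`m`; (b) if `q` is even, `z_{m+q} = z_m` for all `m`; (c) if `q` is odd, `z_q = z₀` iff
`z₁ = e^{iα}·z₀`. -/
theorem stmt_19 (n : ℕ) (hn : 1 ≤ n) (p : ℤ) (q : ℕ) (hq : 1 ≤ q)
    (α : ℝ) (hα : α = 2 * π * p / q) (hcos : Real.cos α ≠ 0)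
    (z : ℕ → EuclideanSpace ℂ (Fin n))
    (hrec : ∀ m, z (m + 2) = z m + (2 * Real.sin α) • (Complex.I • z (m + 1))) :
    (∀ m, z (m + 2 * q) = z m) ∧
    (Even q → ∀ m, z (m + q) = z m) ∧
    (Odd q → (z q = z 0 ↔ z 1 = Complex.exp ((α : ℂ) * Complex.I) • z 0)) := by
  have hq0 : (q : ℂ) ≠ 0 := by
    have : q ≠ 0 := by omega
    exact_mod_cast this
  set a : ℂ := Complex.exp ((α : ℂ) * Complex.I) with ha
  set b : ℂ := -Complex.exp (-((α : ℂ) * Complex.I)) with hb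
  have hab : a * b = -1 := by
    rw [ha, hb, mul_neg, ← Complex.exp_add]; simp
  have haE : a = Complex.cos α + Complex.sin α * Complex.I := by
    rw [ha, Complex.exp_mul_I]
  have hbE : b = -(Complex.cos α - Complex.sin α * Complex.I) := by
    rw [hb, ← neg_mul, Complex.exp_mul_I, Complex.cos_neg, Complex.sin_neg]; ring
  have hs : a + b = 2 * Complex.sin α * Complex.I := by rw [haE, hbE]; ring
  have hd : a - b ≠ 0 := by
    have h1 : a - b = 2 * Complex.cos α := by rw [haE, hbE]; ring
    rw [h1, ← Complex.ofReal_cos]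
    exact mul_ne_zero two_ne_zero (by exact_mod_cast hcos)
  have haq : a ^ q = 1 := by
    rw [ha, ← Complex.exp_nat_mul, Complex.exp_eq_one_iff]
    refine ⟨p, ?_⟩
    rw [hα]; push_cast; field_simp
  have hbq : b ^ q = (-1) ^ q := by
    have h1 : (a * b) ^ q = (-1) ^ q := by rw [hab]
    rwa [mul_pow, haq, one_mul] at h1
  have cf : ∀ (i : Fin n) (m : ℕ), (a - b) * z m i =
      a ^ m * (z 1 i - b * z 0 i) - b ^ m * (z 1 i - a * z 0 i) := by
    intro i
    apply closed_form_aux a b _ hs hab (fun m => z m i)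
    intro m
    have h1 := congrArg (fun v => v i) (hrec m)
    simp at h1
    simp only [h1]
    ring
  refine ⟨?_, ?_, ?_⟩
  · intro m
    ext i
    apply mul_left_cancel₀ hd
    have h2 : b ^ (2 * q) = 1 := by
      rw [mul_comm, pow_mul, hbq, ← pow_mul, mul_comm, pow_mul]; simp
    have h3 : a ^ (2 * q) = 1 := by rw [mul_comm, pow_mul, haq]; simp
    rw [cf, cf, pow_add, pow_add, h2, h3]; ring
  · intro he m
    ext i
    apply mul_left_cancel₀ hd
    rw [cf, cf, pow_add, pow_add, haq, hbq, he.neg_one_pow]; ring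
  · intro ho
    have key : ∀ i, (a - b) * z q i = (z 1 i - b * z 0 i) + (z 1 i - a * z 0 i) := by
      intro i
      rw [cf, haq, hbq, ho.neg_one_pow]; ring
    constructor
    · intro h
      ext i
      have k := key i
      rw [h] at k
      simp only [PiLp.smul_apply, smul_eq_mul]
      linear_combination (-1 / 2 : ℂ) * k
    · intro h
      ext i
      have k := key i
      have h1 := congrArg (fun v => v i) h
      simp only [PiLp.smul_apply, smul_eq_mul] at h1
      apply mul_left_cancel₀ hd
      linear_combination k + 2 * h1
end
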